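/- arXiv:2603.25113 — 2 statements merged into one kernel-verified Lean document; each statement's English description precedes it below -/
import Mathlib

section
/- Every 2-saturated subcubic graph in which every 3-vertex lies on a triangle admits a (1,1,2)-packing coloring. -/
open SimpleGraph

/-- `c` is an `S`-packing coloring of `G` for the sequence `s`: vertices sharing
color `i` are at distance greater than `s i`. -/
def IsPackingColoring {V : Type*} (G : SimpleGraph V) {m : ℕ} (s : Fin m → ℕ)
    (c : V → Fin m) : Prop :=
  ∀ u v : V, u ≠ v → c u = c v → G.Reachable u v → s (c u) < G.dist u v

/-- `G` is subcubic: every vertex has degree at most 3. -/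
def Subcubic {V : Type*} [Fintype V] (G : SimpleGraph V) [DecidableRel G.Adj] : Prop :=
  ∀ v : V, G.degree v ≤ 3

/-- `G` is `k`-saturated: every 3-vertex is adjacent to at most `k` 3-vertices. -/
def Saturated {V : Type*} [Fintype V] (G : SimpleGraph V) [DecidableRel G.Adj] (k : ℕ) : Prop :=
  ∀ v : V, G.degree v = 3 →
    ((G.neighborFinset v).filter (fun u => G.degree u = 3)).card ≤ k

/-!
We look for a set `C` pairwise at distance greater than 2 such that `G - C` is bipartite.

First, some such `C` meets every triangle. Call a vertex a hub if all its edges lie on triangles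
and every triangle meeting its neighborhood contains it; a maximal 2-packing of hubs meets every
triangle that has a hub. A triangle without hubs has exactly three outer neighbors, and each
vertex is an outer neighbor of at most three such triangles, so by Hall's theorem these triangles
get distinct outer neighbors. Picking from each of them the vertex adjacent to its outer neighbor
extends the packing.

Now let an odd cycle avoid `C`. Its vertices with a neighbor `a` in `C` come in adjacent pairs,
which form triangles with `a`, so some vertex of the cycle has no neighbor in `C`. This vertex, or
a neighbor of it on the cycle, can replace its neighbors in `C`; the exchange destroys the cycle
and lets no new cycle avoid the packing. Hence a `C` with the fewest vertices on odd cycles of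
`G - C` leaves none.
-/

theorem exists_maximal_pairwise_subset {α : Type*} (r : α → α → Prop) [Std.Symm r]
    (s : Set α) : ∃ t ⊆ s, t.Pairwise r ∧ ∀ x ∈ s, x ∉ t → ∃ y ∈ t, ¬ r x y := by
  obtain ⟨t, ht⟩ := zorn_subset {t | t ⊆ s ∧ t.Pairwise r} fun c hc hchain =>
    ⟨⋃₀ c, ⟨Set.sUnion_subset fun t ht => (hc ht).1,
      (Set.pairwise_sUnion hchain.directedOn).2 fun t ht => (hc ht).2⟩,
      fun t ht => Set.subset_sUnion_of_mem ht⟩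
  refine ⟨t, ht.prop.1, ht.prop.2, fun x hxs hxt => ?_⟩
  by_contra! hr
  exact hxt (ht.le_of_ge ⟨Set.insert_subset hxs ht.prop.1,
    Set.pairwise_insert_of_symm.2 ⟨ht.prop.2, fun y hy _ => hr y hy⟩⟩ (Set.subset_insert x t)
    (Set.mem_insert x t))

theorem exists_mem_ne_ne_of_two_lt_card {α : Type*} {s : Finset α} (hs : 2 < s.card) (a b : α) :
    ∃ x ∈ s, x ≠ a ∧ x ≠ b := by
  classical
  obtain ⟨x, hxs, hx⟩ := Finset.exists_mem_notMem_of_card_lt_card (Finset.card_le_two.trans_lt hs)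
  rw [Finset.mem_insert, Finset.mem_singleton, not_or] at hx
  exact ⟨x, hxs, hx⟩

theorem exists_injective_of_card_le {ι α : Type*} [Fintype ι] [DecidableEq α] {t : ι → Finset α}
    {k : ℕ} (hk : 0 < k) (hcard : ∀ i, k ≤ (t i).card)
    (hmem : ∀ a, (Finset.univ.filter (a ∈ t ·)).card ≤ k) :
    ∃ f : ι → α, f.Injective ∧ ∀ i, f i ∈ t i := by
  classical
  refine (Finset.all_card_le_biUnion_card_iff_exists_injective t).1 fun s =>
    Nat.le_of_mul_le_mul_right
      (Finset.card_mul_le_card_mul (fun i a => a ∈ t i) (fun i hi => ?_) fun a _ => ?_) hk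
  · refine (hcard i).trans (Finset.card_le_card fun a ha => ?_)
    exact Finset.mem_filter.2 ⟨Finset.mem_biUnion.2 ⟨i, hi, ha⟩, ha⟩
  · exact (Finset.card_le_card (Finset.filter_subset_filter _ s.subset_univ)).trans (hmem a)

section Walks

variable {V : Type*} {G : SimpleGraph V}

theorem exists_odd_isCycle_of_odd_loop {u : V} (w : G.Walk u u) (hodd : Odd w.length) :
    ∃ (v : V) (c : G.Walk v v), c.IsCycle ∧ Odd c.length := by
  induction hn : w.length using Nat.strong_induction_on generalizing u with
  | _ n ih =>
    subst hn
    cases w with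
    | nil => simp at hodd
    | @cons _ v _ h p =>
      by_cases hp : p.IsPath
      · refine ⟨u, .cons h p, (Walk.cons_isCycle_iff p h).2 ⟨hp, fun he => ?_⟩, hodd⟩
        rw [Walk.length_cons, hp.length_eq_one_of_mem_edges (Sym2.eq_swap ▸ he)] at hodd
        exact absurd hodd (by decide)
      · rw [Walk.isPath_iff_isSubwalk_imp_nil] at hp
        push Not at hp
        obtain ⟨x, q, ⟨r, s, rfl⟩, hq⟩ := hp
        have hq_pos : 0 < q.length := Walk.not_nil_iff_lt_length.1 hq
        simp only [Walk.length_cons, Walk.length_append] at hodd ih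
        rcases Nat.even_or_odd q.length with hq_even | hq_odd
        · have hlen : (Walk.cons h (r.append s)).length = r.length + s.length + 1 := by
            rw [Walk.length_cons, Walk.length_append]
          exact ih _ (by lia) (.cons h (r.append s)) (by grind) rfl
        · exact ih _ (by lia) q hq_odd rfl

theorem colorable_two_of_forall_isCycle_not_odd
    (h : ∀ (v : V) (c : G.Walk v v), c.IsCycle → ¬ Odd c.length) : G.Colorable 2 := by
  refine two_colorable_iff_forall_loop_even.2 fun u w => Nat.not_odd_iff_even.1 fun hodd => ?_
  obtain ⟨v, c, hc, hc_odd⟩ := exists_odd_isCycle_of_odd_loop w hodd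
  exact h v c hc hc_odd

theorem exists_two_adj_of_mem_support_isCycle {u v : V} {c : G.Walk u u} (hc : c.IsCycle)
    (hv : v ∈ c.support) : ∃ x ∈ c.support, ∃ y ∈ c.support, x ≠ y ∧ G.Adj v x ∧ G.Adj v y := by
  obtain ⟨x, y, hxy, hnbrs⟩ := Set.ncard_eq_two.1 (hc.ncard_neighborSet_toSubgraph_eq_two hv)
  have hx : c.toSubgraph.Adj v x := by simp [← Subgraph.mem_neighborSet, hnbrs]
  have hy : c.toSubgraph.Adj v y := by simp [← Subgraph.mem_neighborSet, hnbrs]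
  exact ⟨x, c.mem_verts_toSubgraph.1 hx.snd_mem, y, c.mem_verts_toSubgraph.1 hy.snd_mem,
    hxy, hx.adj_sub, hy.adj_sub⟩

theorem ncard_support_of_isCycle {u : V} {c : G.Walk u u} (hc : c.IsCycle) :
    {v | v ∈ c.support}.ncard = c.length := by
  classical
  have htail : {v | v ∈ c.support} = (c.support.tail.toFinset : Set V) := by
    ext v
    rw [List.coe_toFinset, Set.mem_ofPred_eq, Set.mem_ofPred_eq, Walk.mem_support_iff]
    refine or_iff_right_of_imp ?_
    rintro rfl
    exact Walk.end_mem_tail_support hc.not_nil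
  rw [htail, Set.ncard_coe_finset, List.toFinset_card_of_nodup hc.support_nodup, List.length_tail,
    c.length_support, Nat.add_sub_cancel]

theorem exists_boundary_edge_ne_of_isTrail {u x y : V} {c : G.Walk u u} (hc : c.IsTrail)
    {S : Set V} (hx : x ∈ c.support) (hxS : x ∈ S) (hy : y ∈ c.support) (hyS : y ∉ S)
    (e : Sym2 V) : ∃ p ∈ S, ∃ q ∉ S, s(p, q) ∈ c.edges ∧ s(p, q) ≠ e := by
  classical
  -- The two arcs of `c` between `x` and `y` cross the boundary of `S` in different edges.
  have hy' : y ∈ (c.rotate x hx).support := (c.mem_support_rotate_iff x hx).2 hy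
  have mem_edges {f : Sym2 V} (hf : f ∈ (c.rotate x hx).edges) : f ∈ c.edges :=
    (c.rotate_edges x hx).mem_iff.1 hf
  obtain ⟨d, hd, hd_fst, hd_snd⟩ :=
    ((c.rotate x hx).takeUntil y hy').exists_boundary_dart S hxS hyS
  obtain ⟨d', hd', hd'_fst, hd'_snd⟩ :=
    ((c.rotate x hx).dropUntil y hy').exists_boundary_dart Sᶜ hyS (not_not.2 hxS)
  have hdd' : d.edge ≠ d'.edge := fun h =>
    ((Walk.isTrail_rotate hx).2 hc).disjoint_edges_takeUntil_dropUntil hy'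
      (List.mem_map_of_mem hd) (h ▸ List.mem_map_of_mem hd')
  have hd_edges := mem_edges (Walk.edges_takeUntil_subset_edges _ hy' (List.mem_map_of_mem hd))
  have hd'_edges := mem_edges (Walk.edges_dropUntil_subset_edges _ hy' (List.mem_map_of_mem hd'))
  by_cases he : d.edge = e
  · have hd'_swap : s(d'.snd, d'.fst) = d'.edge := Sym2.eq_swap
    exact ⟨d'.snd, not_not.1 hd'_snd, d'.fst, hd'_fst, hd'_swap ▸ hd'_edges,
      fun h => hdd' (he.trans (h.symm.trans hd'_swap))⟩
  · exact ⟨d.fst, hd_fst, d.snd, hd_snd, hd_edges, he⟩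

end Walks

section TwoPacking

variable {V : Type*} {G : SimpleGraph V} {C : Set V}

/-- A 2-packing of `G`: the vertices of `C` are pairwise at distance greater than 2. The extended
distance makes vertices in different components infinitely far apart. -/
def IsTwoPacking (G : SimpleGraph V) (C : Set V) : Prop :=
  C.Pairwise fun u v => 2 < G.edist u v

theorem two_lt_edist_of_forall_not_adj {u v : V} (hne : u ≠ v) (hadj : ¬ G.Adj u v)
    (hcommon : ∀ w, G.Adj u w → ¬ G.Adj v w) : 2 < G.edist u v :=
  two_lt_edist_iff.2 ⟨hne, hadj, Set.eq_empty_of_forall_notMem fun w hw => hcommon w hw.1 hw.2⟩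

namespace IsTwoPacking

theorem not_adj (hC : IsTwoPacking G C) {u v : V} (hu : u ∈ C) (hv : v ∈ C) : ¬ G.Adj u v :=
  fun h => (two_lt_edist_iff.1 (hC hu hv h.ne)).2.1 h

theorem eq_of_adj_of_adj (hC : IsTwoPacking G C) {u v w : V} (hu : u ∈ C) (hv : v ∈ C)
    (huw : G.Adj u w) (hvw : G.Adj v w) : u = v := by
  by_contra hne
  exact (two_lt_edist_iff.1 (hC hu hv hne)).2.2.subset ⟨huw, hvw⟩

theorem union {D : Set V} (hC : IsTwoPacking G C) (hD : IsTwoPacking G D)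
    (hCD : ∀ u ∈ C, ∀ v ∈ D, 2 < G.edist u v) : IsTwoPacking G (C ∪ D) := by
  rintro u (hu | hu) v (hv | hv) hne
  · exact hC hu hv hne
  · exact hCD u hu v hv
  · exact edist_comm (G := G) ▸ hCD v hv u hu
  · exact hD hu hv hne

theorem exists_isPackingColoring (hC : IsTwoPacking G C) {k : ℕ}
    (hcolorable : (G.induce Cᶜ).Colorable k) :
    ∃ c : V → Fin (k + 1), IsPackingColoring G (Fin.snoc (fun _ => 1) 2) c := by
  classical
  obtain ⟨col⟩ := hcolorable
  let c : V → Fin (k + 1) := fun v => if hv : v ∈ C then Fin.last k else (col ⟨v, hv⟩).castSucc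
  have c_of_mem {v : V} (hv : v ∈ C) : c v = Fin.last k := dif_pos hv
  have c_of_notMem {v : V} (hv : v ∉ C) : c v = (col ⟨v, hv⟩).castSucc := dif_neg hv
  refine ⟨c, fun u v hne hcuv hreach => ?_⟩
  by_cases hu : u ∈ C <;> by_cases hv : v ∈ C
  · have hdist : 2 < G.edist u v := hC hu hv hne
    rw [c_of_mem hu, Fin.snoc_last]
    rwa [← hreach.coe_dist_eq_edist, Nat.ofNat_lt_cast] at hdist
  · rw [c_of_mem hu, c_of_notMem hv] at hcuv
    exact absurd hcuv.symm (Fin.castSucc_ne_last _)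
  · rw [c_of_notMem hu, c_of_mem hv] at hcuv
    exact absurd hcuv (Fin.castSucc_ne_last _)
  · have hnadj : ¬ G.Adj u v := fun h => col.valid (v := ⟨u, hu⟩) (w := ⟨v, hv⟩) h <| by
      rwa [c_of_notMem hu, c_of_notMem hv, Fin.castSucc_inj] at hcuv
    rw [c_of_notMem hu, Fin.snoc_castSucc]
    exact hreach.one_lt_dist_of_ne_of_not_adj hne hnadj

end IsTwoPacking

end TwoPacking

section Cliques

variable {V : Type*} {G : SimpleGraph V} {T T' : Finset V} {a b c d v w : V}

theorem exists_adj_adj_of_isNClique_three (hT : G.IsNClique 3 T) (ha : a ∈ T) (hb : b ∈ T) :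
    ∃ c ∈ T, G.Adj a c ∧ G.Adj b c := by
  obtain ⟨c, hc, hca, hcb⟩ := exists_mem_ne_ne_of_two_lt_card hT.card_eq.ge a b
  exact ⟨c, hc, hT.isClique ha hc hca.symm, hT.isClique hb hc hcb.symm⟩

variable [Fintype V] [DecidableRel G.Adj]

theorem card_neighborFinset_sdiff_add [DecidableEq V] {n : ℕ} (hT : G.IsNClique n T) (hv : v ∈ T) :
    (G.neighborFinset v \ T).card + n = G.degree v + 1 := by
  have hinter : T ∩ G.neighborFinset v = T.erase v := by
    ext w
    rw [Finset.mem_inter, mem_neighborFinset, Finset.mem_erase, and_comm]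
    exact ⟨fun h => ⟨h.1.ne', h.2⟩, fun h => ⟨hT.isClique hv h.2 h.1.symm, h.2⟩⟩
  have hcard := Finset.card_sdiff_add_card_inter (G.neighborFinset v) T
  rw [Finset.inter_comm, hinter, card_neighborFinset_eq_degree] at hcard
  rw [← hcard, add_assoc, Finset.card_erase_add_one hv, hT.card_eq]

namespace Subcubic

theorem neighborFinset_eq [DecidableEq V] (hG : Subcubic G) (ha : G.Adj v a) (hb : G.Adj v b)
    (hc : G.Adj v c) (hab : a ≠ b) (hac : a ≠ c) (hbc : b ≠ c) :
    G.neighborFinset v = {a, b, c} := by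
  refine (Finset.eq_of_subset_of_card_le ?_ ?_).symm
  · simp [Finset.insert_subset_iff, ha, hb, hc]
  · rw [Finset.card_eq_three.2 ⟨a, b, c, hab, hac, hbc, rfl⟩]
    exact hG v

theorem degree_eq_three (hG : Subcubic G) (ha : G.Adj v a) (hb : G.Adj v b) (hc : G.Adj v c)
    (hab : a ≠ b) (hac : a ≠ c) (hbc : b ≠ c) : G.degree v = 3 := by
  classical
  rw [← card_neighborFinset_eq_degree, hG.neighborFinset_eq ha hb hc hab hac hbc,
    Finset.card_eq_three]
  exact ⟨a, b, c, hab, hac, hbc, rfl⟩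

theorem eq_or_eq_or_eq_of_adj (hG : Subcubic G) (ha : G.Adj v a) (hb : G.Adj v b)
    (hc : G.Adj v c) (hab : a ≠ b) (hac : a ≠ c) (hbc : b ≠ c) (hd : G.Adj v d) :
    d = a ∨ d = b ∨ d = c := by
  classical
  rw [← mem_neighborFinset, hG.neighborFinset_eq ha hb hc hab hac hbc] at hd
  simpa only [Finset.mem_insert, Finset.mem_singleton] using hd

theorem exists_mem_mem_ne_of_isNClique (hG : Subcubic G) (hT : G.IsNClique 3 T)
    (hT' : G.IsNClique 3 T') (haT : a ∈ T) (haT' : a ∈ T') : ∃ b ∈ T, b ∈ T' ∧ b ≠ a := by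
  classical
  have erase_subset {S : Finset V} (hS : G.IsNClique 3 S) (haS : a ∈ S) :
      S.erase a ⊆ G.neighborFinset a := fun w hw =>
    (mem_neighborFinset ..).2
      (hS.isClique haS (Finset.mem_of_mem_erase hw) (Finset.ne_of_mem_erase hw).symm)
  obtain ⟨b, hb⟩ := Finset.inter_nonempty_of_card_lt_card_add_card
    (erase_subset hT haT) (erase_subset hT' haT') <| by
      rw [Finset.card_erase_of_mem haT, Finset.card_erase_of_mem haT', hT.card_eq, hT'.card_eq]
      exact (hG a).trans_lt (by decide)
  rw [Finset.mem_inter, Finset.mem_erase, Finset.mem_erase] at hb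
  exact ⟨b, hb.1.2, hb.2.2, hb.1.1⟩

end Subcubic

theorem Saturated.degree_ne_three_of_adj (hsat : Saturated G 2) (hsub : Subcubic G)
    (ha : G.Adj v a) (hb : G.Adj v b) (hc : G.Adj v c) (hab : a ≠ b) (hac : a ≠ c) (hbc : b ≠ c)
    (ha_deg : G.degree a = 3) (hb_deg : G.degree b = 3) : G.degree c ≠ 3 := by
  classical
  intro hc_deg
  have hcard := hsat v (hsub.degree_eq_three ha hb hc hab hac hbc)
  have hall : ∀ u ∈ ({a, b, c} : Finset V), G.degree u = 3 := by
    simp [ha_deg, hb_deg, hc_deg]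
  rw [hsub.neighborFinset_eq ha hb hc hab hac hbc, Finset.filter_true_of_mem hall,
    Finset.card_eq_three.2 ⟨a, b, c, hab, hac, hbc, rfl⟩] at hcard
  exact absurd hcard (by decide)

theorem Saturated.eq_of_common_neighbors (hsat : Saturated G 2) (hsub : Subcubic G)
    (hab : G.Adj a b) (hac : G.Adj a c) (hbc : G.Adj b c) (had : G.Adj a d) (hbd : G.Adj b d)
    (hc_deg : G.degree c = 3) (hd_deg : G.degree d = 3) : c = d := by
  by_contra hcd
  have hb_deg : G.degree b = 3 := hsub.degree_eq_three hab.symm hbc hbd hac.ne had.ne hcd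
  exact hsat.degree_ne_three_of_adj hsub hab hac had hbc.ne hbd.ne hcd hb_deg hc_deg hd_deg

end Cliques

section Hubs

variable {V : Type*} {G : SimpleGraph V} {T T' : Finset V} {C : Set V} {v x y : V}

/-- A set of vertices pairwise at distance greater than 2 that meets every triangle: the candidates
for the color class of distance 2. -/
structure IsTriangleHittingPacking (G : SimpleGraph V) (C : Set V) : Prop where
  isTwoPacking : IsTwoPacking G C
  exists_mem_of_isNClique : ∀ T, G.IsNClique 3 T → ∃ v ∈ T, v ∈ C

/-- A hub: a vertex all of whose edges lie on triangles, and which belongs to every triangle that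
meets its neighborhood. A maximal 2-packing of hubs meets every triangle containing a hub. -/
structure IsHub (G : SimpleGraph V) (x : V) : Prop where
  exists_common_neighbor : ∀ y, G.Adj x y → ∃ w, G.Adj x w ∧ G.Adj y w
  mem_of_isNClique : ∀ T, G.IsNClique 3 T → ∀ a ∈ T, G.Adj x a → x ∈ T

/-- A triangle none of whose vertices is a hub. -/
structure IsHublessTriangle (G : SimpleGraph V) (T : Finset V) : Prop where
  isNClique : G.IsNClique 3 T
  not_isHub : ∀ v ∈ T, ¬ IsHub G v

namespace IsHub

theorem adj_of_adj_of_adj (hx : IsHub G x) (hy : IsHub G y) {z : V} (hxz : G.Adj x z)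
    (hyz : G.Adj y z) (hne : x ≠ y) : G.Adj x y := by
  classical
  obtain ⟨w, hxw, hzw⟩ := hx.exists_common_neighbor z hxz
  have hT : G.IsNClique 3 {x, z, w} := is3Clique_triple_iff.2 ⟨hxz, hxw, hzw⟩
  have hyT := hy.mem_of_isNClique _ hT z (by simp) hyz
  exact hT.isClique (by simp) hyT hne

theorem mem_of_edist_le_two (hx : IsHub G x) (hy : IsHub G y) (h : ¬ 2 < G.edist x y)
    (hT : G.IsNClique 3 T) (hxT : x ∈ T) : y ∈ T := by
  by_cases hxy : x = y
  · exact hxy ▸ hxT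
  suffices hadj : G.Adj x y from hy.mem_of_isNClique T hT x hxT hadj.symm
  by_contra hnadj
  exact h (two_lt_edist_of_forall_not_adj hxy hnadj fun z hxz hyz =>
    hnadj (hx.adj_of_adj_of_adj hy hxz hyz hxy))

end IsHub

theorem exists_isTwoPacking_forall_isHub (G : SimpleGraph V) :
    ∃ C, IsTwoPacking G C ∧ (∀ x ∈ C, IsHub G x) ∧
      ∀ T, G.IsNClique 3 T → ∀ x ∈ T, IsHub G x → ∃ v ∈ T, v ∈ C := by
  have : Std.Symm fun u v => 2 < G.edist u v := ⟨fun u v h => edist_comm (G := G) ▸ h⟩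
  obtain ⟨C, hC_hub, hC, hmax⟩ :=
    exists_maximal_pairwise_subset (fun u v => 2 < G.edist u v) {x | IsHub G x}
  refine ⟨C, hC, hC_hub, fun T hT x hxT hx => ?_⟩
  by_cases hxC : x ∈ C
  · exact ⟨x, hxT, hxC⟩
  · obtain ⟨y, hyC, hxy⟩ := hmax x hx hxC
    exact ⟨y, hx.mem_of_edist_le_two (hC_hub hyC) hxy hT hxT, hyC⟩

variable [Fintype V] [DecidableRel G.Adj]

theorem Saturated.not_adj_of_diamond (hsat : Saturated G 2) (hsub : Subcubic G) {p q r s : V}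
    (hpq : G.Adj p q) (hpr : G.Adj p r) (hps : G.Adj p s) (hqr : G.Adj q r) (hqs : G.Adj q s)
    (hrs : r ≠ s) : ¬ G.Adj r s := fun h =>
  hrs (hsat.eq_of_common_neighbors hsub hpq hpr hqr hps hqs
    (hsub.degree_eq_three hpr.symm hqr.symm h hpq.ne hps.ne hqs.ne)
    (hsub.degree_eq_three hps.symm hqs.symm h.symm hpq.ne hpr.ne hqr.ne))

theorem IsHub.of_diamond (hsub : Subcubic G) (hsat : Saturated G 2) {p q r s : V}
    (hpq : G.Adj p q) (hpr : G.Adj p r) (hps : G.Adj p s) (hqr : G.Adj q r) (hqs : G.Adj q s)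
    (hrs : r ≠ s) : IsHub G p := by
  classical
  have hrs_nadj : ¬ G.Adj r s := hsat.not_adj_of_diamond hsub hpq hpr hps hqr hqs hrs
  have eq_of_adj_p {a : V} (ha : G.Adj p a) : a = q ∨ a = r ∨ a = s :=
    hsub.eq_or_eq_or_eq_of_adj hpq hpr hps hqr.ne hqs.ne hrs ha
  have eq_of_adj_q {a : V} (ha : G.Adj q a) : a = p ∨ a = r ∨ a = s :=
    hsub.eq_or_eq_or_eq_of_adj hpq.symm hqr hqs hpr.ne hps.ne hrs ha
  have mem_of_q_mem {T : Finset V} (hT : G.IsNClique 3 T) (hqT : q ∈ T) : p ∈ T := by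
    by_contra hpT
    obtain ⟨a, haT, hqa, -⟩ := exists_adj_adj_of_isNClique_three hT hqT hqT
    obtain ⟨b, hbT, hqb, hab⟩ := exists_adj_adj_of_isNClique_three hT hqT haT
    rcases (eq_of_adj_q hqa).resolve_left (ne_of_mem_of_not_mem haT hpT) with rfl | rfl <;>
      rcases (eq_of_adj_q hqb).resolve_left (ne_of_mem_of_not_mem hbT hpT) with rfl | rfl
    exacts [hab.ne rfl, hrs_nadj hab, hrs_nadj hab.symm, hab.ne rfl]
  have mem_of_mem {T : Finset V} {a : V} (hpa : G.Adj p a) (hqa : G.Adj q a)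
      (hT : G.IsNClique 3 T) (haT : a ∈ T) : p ∈ T := by
    obtain ⟨b, hb, hbT, hba⟩ := hsub.exists_mem_mem_ne_of_isNClique
      (is3Clique_triple_iff.2 ⟨hpq, hpa, hqa⟩) hT (by simp) haT
    simp only [Finset.mem_insert, Finset.mem_singleton] at hb
    rcases hb with rfl | rfl | rfl
    · exact hbT
    · exact mem_of_q_mem hT hbT
    · exact absurd rfl hba
  refine ⟨fun a ha => ?_, fun T hT a haT ha => ?_⟩
  · rcases eq_of_adj_p ha with rfl | rfl | rfl
    exacts [⟨r, hpr, hqr⟩, ⟨q, hpq, hqr.symm⟩, ⟨q, hpq, hqs.symm⟩]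
  · rcases eq_of_adj_p ha with rfl | rfl | rfl
    exacts [mem_of_q_mem hT haT, mem_of_mem hpr hqr hT haT, mem_of_mem hps hqs hT haT]

namespace IsHublessTriangle

theorem mem_of_adj_of_adj (hT : IsHublessTriangle G T) (hsub : Subcubic G) (hsat : Saturated G 2)
    {p q s : V} (hp : p ∈ T) (hq : q ∈ T) (hpq : p ≠ q) (hps : G.Adj p s) (hqs : G.Adj q s) :
    s ∈ T := by
  by_contra hs
  obtain ⟨r, hr, hpr, hqr⟩ := exists_adj_adj_of_isNClique_three hT.isNClique hp hq
  exact hT.not_isHub p hp (.of_diamond hsub hsat (hT.isNClique.isClique hp hq hpq) hpr hps hqr hqs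
    (ne_of_mem_of_not_mem hr hs))

theorem eq_of_mem_of_mem (hT : IsHublessTriangle G T) (hsub : Subcubic G) (hsat : Saturated G 2)
    (hT' : G.IsNClique 3 T') (hv : v ∈ T) (hv' : v ∈ T') : T = T' := by
  obtain ⟨b, hb, hb', hbv⟩ := hsub.exists_mem_mem_ne_of_isNClique hT.isNClique hT' hv hv'
  refine (Finset.eq_of_subset_of_card_le (fun w hw => ?_)
    (hT.isNClique.card_eq.trans hT'.card_eq.symm).le).symm
  by_cases hwv : w = v
  · exact hwv ▸ hv
  by_cases hwb : w = b
  · exact hwb ▸ hb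
  exact hT.mem_of_adj_of_adj hsub hsat hv hb hbv.symm
    (hT'.isClique hv' hw (Ne.symm hwv)) (hT'.isClique hb' hw (Ne.symm hwb))

theorem degree_eq_three (hT : IsHublessTriangle G T) (hsub : Subcubic G) (hsat : Saturated G 2)
    (hv : v ∈ T) : G.degree v = 3 := by
  classical
  by_contra hdeg
  have hcard := card_neighborFinset_sdiff_add hT.isNClique hv
  have hv_le := hsub v
  have hnbr : G.neighborFinset v ⊆ T :=
    Finset.sdiff_eq_empty_iff_subset.1 (Finset.card_eq_zero.1 (by lia))
  have mem_of_adj {a : V} (ha : G.Adj v a) : a ∈ T := hnbr ((mem_neighborFinset ..).2 ha)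
  refine hT.not_isHub v hv ⟨fun a ha => ?_, fun T' hT' a haT' ha => ?_⟩
  · obtain ⟨w, -, hw⟩ := exists_adj_adj_of_isNClique_three hT.isNClique hv (mem_of_adj ha)
    exact ⟨w, hw⟩
  · exact hT.eq_of_mem_of_mem hsub hsat hT' (mem_of_adj ha) haT' ▸ hv

theorem card_neighborFinset_sdiff [DecidableEq V] (hT : IsHublessTriangle G T) (hsub : Subcubic G)
    (hsat : Saturated G 2) (hv : v ∈ T) : (G.neighborFinset v \ T).card = 1 := by
  have hcard := card_neighborFinset_sdiff_add hT.isNClique hv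
  rw [hT.degree_eq_three hsub hsat hv] at hcard
  exact Nat.add_right_cancel hcard

theorem eq_of_adj_of_notMem (hT : IsHublessTriangle G T) (hsub : Subcubic G) (hsat : Saturated G 2)
    (hv : v ∈ T) (hvx : G.Adj v x) (hx : x ∉ T) (hvy : G.Adj v y) (hy : y ∉ T) : x = y := by
  classical
  exact Finset.card_le_one.1 (hT.card_neighborFinset_sdiff hsub hsat hv).le x
    (Finset.mem_sdiff.2 ⟨(mem_neighborFinset ..).2 hvx, hx⟩) y
    (Finset.mem_sdiff.2 ⟨(mem_neighborFinset ..).2 hvy, hy⟩)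

theorem degree_ne_three_of_adj_of_notMem (hT : IsHublessTriangle G T) (hsub : Subcubic G)
    (hsat : Saturated G 2) (hv : v ∈ T) (hvx : G.Adj v x) (hx : x ∉ T) : G.degree x ≠ 3 := by
  obtain ⟨a, ha, hva, -⟩ := exists_adj_adj_of_isNClique_three hT.isNClique hv hv
  obtain ⟨b, hb, hvb, hab⟩ := exists_adj_adj_of_isNClique_three hT.isNClique hv ha
  exact hsat.degree_ne_three_of_adj hsub hva hvb hvx hab.ne (ne_of_mem_of_not_mem ha hx)
    (ne_of_mem_of_not_mem hb hx) (hT.degree_eq_three hsub hsat ha) (hT.degree_eq_three hsub hsat hb)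

theorem two_lt_edist_of_isHub (hT : IsHublessTriangle G T) (hsub : Subcubic G)
    (hsat : Saturated G 2) (hx : IsHub G x) (hv : v ∈ T) : 2 < G.edist x v := by
  have hxT : x ∉ T := fun h => hT.not_isHub x h hx
  have hnadj : ∀ z ∈ T, ¬ G.Adj x z := fun z hz h =>
    hxT (hx.mem_of_isNClique T hT.isNClique z hz h)
  refine two_lt_edist_of_forall_not_adj (ne_of_mem_of_not_mem hv hxT).symm (hnadj v hv)
    fun z hxz hvz => ?_
  obtain ⟨w, hxw, hzw⟩ := hx.exists_common_neighbor z hxz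
  refine hT.degree_ne_three_of_adj_of_notMem hsub hsat hv hvz (fun hz => hnadj z hz hxz) ?_
  exact hsub.degree_eq_three hxz.symm hvz.symm hzw (ne_of_mem_of_not_mem hv hxT).symm hxw.ne
    fun hvw => hnadj v hv (hvw ▸ hxw)

theorem not_adj_of_ne (hT : IsHublessTriangle G T) (hT' : IsHublessTriangle G T')
    (hsub : Subcubic G) (hsat : Saturated G 2) (hne : T ≠ T') (hx : x ∈ T) (hy : y ∈ T') :
    ¬ G.Adj x y := fun hxy =>
  hT.degree_ne_three_of_adj_of_notMem hsub hsat hx hxy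
    (fun h => hne (hT.eq_of_mem_of_mem hsub hsat hT'.isNClique h hy))
    (hT'.degree_eq_three hsub hsat hy)

end IsHublessTriangle

/-- The outer vertex boundary of `T`: the vertices outside `T` with a neighbor in `T`. -/
def outerBoundary [DecidableEq V] (G : SimpleGraph V) [DecidableRel G.Adj] (T : Finset V) :
    Finset V :=
  T.biUnion fun v => G.neighborFinset v \ T

theorem mem_outerBoundary [DecidableEq V] :
    x ∈ outerBoundary G T ↔ x ∉ T ∧ ∃ v ∈ T, G.Adj v x := by
  simp only [outerBoundary, Finset.mem_biUnion, Finset.mem_sdiff, mem_neighborFinset]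
  grind

theorem IsHublessTriangle.card_outerBoundary [DecidableEq V] (hT : IsHublessTriangle G T)
    (hsub : Subcubic G) (hsat : Saturated G 2) : (outerBoundary G T).card = 3 := by
  rw [outerBoundary, Finset.card_biUnion fun v hv w hw hvw => ?disjoint,
    Finset.sum_congr rfl fun v hv => hT.card_neighborFinset_sdiff hsub hsat hv,
    Finset.sum_const, hT.isNClique.card_eq, smul_eq_mul]
  refine Finset.disjoint_left.2 fun x hxv hxw => ?_
  rw [Finset.mem_sdiff, mem_neighborFinset] at hxv hxw
  exact hxv.2 (hT.mem_of_adj_of_adj hsub hsat hv hw hvw hxv.1 hxw.1)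

theorem card_filter_mem_outerBoundary_le [DecidableEq V] (hsub : Subcubic G)
    (hsat : Saturated G 2) (x : V) [Fintype {T // IsHublessTriangle G T}] :
    (Finset.univ.filter fun T : {T // IsHublessTriangle G T} => x ∈ outerBoundary G T.1).card ≤
      G.degree x := by
  have hadj (T : {T // IsHublessTriangle G T}) (hx : x ∈ outerBoundary G T.1) :
    ∃ v ∈ T.1, G.Adj v x := (mem_outerBoundary.1 hx).2
  have : Nonempty V := ⟨x⟩
  choose! g hgT hgx using hadj
  refine Finset.card_le_card_of_injOn g (fun T hT => ?_) fun T hT T' hT' h => ?_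
  · exact (mem_neighborFinset ..).2 (hgx T (Finset.mem_filter.1 hT).2).symm
  · exact Subtype.ext (T.2.eq_of_mem_of_mem hsub hsat T'.2.isNClique
      (hgT T (Finset.mem_filter.1 hT).2) (h ▸ hgT T' (Finset.mem_filter.1 hT').2))

theorem exists_isTwoPacking_forall_isHublessTriangle (hsub : Subcubic G) (hsat : Saturated G 2) :
    ∃ D, IsTwoPacking G D ∧ (∀ v ∈ D, ∃ T, IsHublessTriangle G T ∧ v ∈ T) ∧
      ∀ T, IsHublessTriangle G T → ∃ v ∈ T, v ∈ D := by
  classical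
  obtain ⟨f, hf_inj, hf⟩ := exists_injective_of_card_le three_pos
    (fun T : {T // IsHublessTriangle G T} => (T.2.card_outerBoundary hsub hsat).ge)
    (fun x => (card_filter_mem_outerBoundary_le hsub hsat x).trans (hsub x))
  simp only [mem_outerBoundary] at hf
  choose hfT g hgT hgf using hf
  refine ⟨Set.range g, ?_, Set.forall_mem_range.2 fun T => ⟨T, T.2, hgT T⟩,
    fun T hT => ⟨g ⟨T, hT⟩, hgT ⟨T, hT⟩, Set.mem_range_self _⟩⟩
  rintro _ ⟨T, rfl⟩ _ ⟨T', rfl⟩ hne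
  have hTT' : T.1 ≠ T'.1 := fun h => hne (congrArg g (Subtype.ext h))
  refine two_lt_edist_of_forall_not_adj hne
    (T.2.not_adj_of_ne T'.2 hsub hsat hTT' (hgT T) (hgT T')) fun z hz hz' => ?_
  have hzT : z ∉ T.1 := fun h => T.2.not_adj_of_ne T'.2 hsub hsat hTT' h (hgT T') hz'.symm
  have hzT' : z ∉ T'.1 := fun h => T.2.not_adj_of_ne T'.2 hsub hsat hTT' (hgT T) h hz
  have hfz : f T = z := T.2.eq_of_adj_of_notMem hsub hsat (hgT T) (hgf T) (hfT T) hz hzT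
  have hfz' : f T' = z := T'.2.eq_of_adj_of_notMem hsub hsat (hgT T') (hgf T') (hfT T') hz' hzT'
  exact hTT' (congrArg Subtype.val (hf_inj (hfz.trans hfz'.symm)))

theorem exists_isTriangleHittingPacking (hsub : Subcubic G) (hsat : Saturated G 2) :
    ∃ C, IsTriangleHittingPacking G C := by
  obtain ⟨C, hC, hC_hub, hC_mem⟩ := exists_isTwoPacking_forall_isHub G
  obtain ⟨D, hD, hD_hubless, hD_mem⟩ := exists_isTwoPacking_forall_isHublessTriangle hsub hsat
  refine ⟨C ∪ D, hC.union hD fun x hx v hv => ?_, fun T hT => ?_⟩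
  · obtain ⟨T, hT, hvT⟩ := hD_hubless v hv
    exact hT.two_lt_edist_of_isHub hsub hsat (hC_hub x hx) hvT
  · by_cases hhub : ∃ x ∈ T, IsHub G x
    · obtain ⟨x, hxT, hx⟩ := hhub
      obtain ⟨v, hvT, hv⟩ := hC_mem T hT x hxT hx
      exact ⟨v, hvT, .inl hv⟩
    · push Not at hhub
      obtain ⟨v, hvT, hv⟩ := hD_mem T ⟨hT, hhub⟩
      exact ⟨v, hvT, .inr hv⟩

end Hubs

section Exchange

variable {V : Type*} {G : SimpleGraph V} {C S : Set V} {a b v w : V}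

/-- A set `S` of vertices outside `C`, each with at least two neighbors in `S`; the vertex set of a
cycle avoiding `C` is the motivating example. -/
structure IsCoreAvoiding (G : SimpleGraph V) (C S : Set V) : Prop where
  disjoint : Disjoint S C
  exists_two_adj : ∀ v ∈ S, ∃ x ∈ S, ∃ y ∈ S, x ≠ y ∧ G.Adj v x ∧ G.Adj v y

/-- Every neighbor of `b` outside `C` sees in `C` only neighbors of `b`, so that `b` may replace
its own neighbors in a 2-packing `C`. -/
def IsExchangeable (G : SimpleGraph V) (C : Set V) (b : V) : Prop :=
  ∀ z ∉ C, G.Adj b z → ∀ x ∈ C, G.Adj x z → G.Adj x b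

/-- The set obtained from `C` by replacing the neighbors of `b` by `b`. -/
def exchange (G : SimpleGraph V) (C : Set V) (b : V) : Set V :=
  insert b (C \ G.neighborSet b)

theorem IsTwoPacking.exchange (hC : IsTwoPacking G C) (hb : b ∉ C) (hexch : IsExchangeable G C b) :
    IsTwoPacking G (exchange G C b) := by
  refine IsTwoPacking.union (Set.pairwise_singleton b _) (hC.mono Set.sdiff_subset) ?_
  rintro u rfl x ⟨hx, hxu⟩
  refine two_lt_edist_of_forall_not_adj (ne_of_mem_of_not_mem hx hb).symm hxu fun z huz hxz => ?_
  have hz : z ∉ C := fun hz => hC.not_adj hx hz hxz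
  exact hxu (hexch z hz huz x hx hxz).symm

theorem isCoreAvoiding_support {u : V} {c : G.Walk u u} (hc : c.IsCycle)
    (havoid : ∀ v ∈ c.support, v ∉ C) : IsCoreAvoiding G C {v | v ∈ c.support} :=
  ⟨Set.disjoint_left.2 havoid, fun _ hv => exists_two_adj_of_mem_support_isCycle hc hv⟩

/-- The vertices lying on an odd cycle of `G` that avoids `C`: the quantity decreased by an
exchange. -/
def oddCycleVertices (G : SimpleGraph V) (C : Set V) : Set V :=
  {v | ∃ (u : V) (c : G.Walk u u),
    c.IsCycle ∧ Odd c.length ∧ (∀ w ∈ c.support, w ∉ C) ∧ v ∈ c.support}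

theorem colorable_two_of_oddCycleVertices_eq_empty (h : oddCycleVertices G C = ∅) :
    (G.induce Cᶜ).Colorable 2 := by
  refine colorable_two_of_forall_isCycle_not_odd fun u c hc hodd => ?_
  let c' := c.map (Embedding.induce Cᶜ).toHom
  have hc' : c'.IsCycle := hc.map Subtype.val_injective
  have hodd' : Odd c'.length := by rwa [Walk.length_map]
  have havoid : ∀ v ∈ c'.support, v ∉ C := by
    rw [Walk.support_map, List.forall_mem_map]
    exact fun v _ => v.2
  exact h.subset ⟨_, c', hc', hodd', havoid, c'.start_mem_support⟩

variable [Fintype V] [DecidableRel G.Adj]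

namespace IsCoreAvoiding

theorem degree_eq_three_of_adj (hS : IsCoreAvoiding G C S) (hsub : Subcubic G) (hv : v ∈ S)
    (ha : a ∉ S) (hva : G.Adj v a) : G.degree v = 3 := by
  obtain ⟨x, hx, y, hy, hxy, hvx, hvy⟩ := hS.exists_two_adj v hv
  exact hsub.degree_eq_three hvx hvy hva hxy (ne_of_mem_of_not_mem hx ha)
    (ne_of_mem_of_not_mem hy ha)

variable (hS : IsCoreAvoiding G C S) (hC : IsTriangleHittingPacking G C)
  (htri : ∀ v : V, G.degree v = 3 → ∃ a b : V, G.Adj v a ∧ G.Adj v b ∧ G.Adj a b)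
include hS hC htri

theorem exists_mem_adj_of_degree_eq_three (hv : v ∈ S) (hdeg : G.degree v = 3) :
    ∃ a ∈ C, ∃ d, G.Adj v a ∧ G.Adj v d ∧ G.Adj d a := by
  classical
  obtain ⟨x, y, hvx, hvy, hxy⟩ := htri v hdeg
  obtain ⟨z, hz, hzC⟩ := hC.exists_mem_of_isNClique _ (is3Clique_triple_iff.2 ⟨hvx, hvy, hxy⟩)
  simp only [Finset.mem_insert, Finset.mem_singleton] at hz
  rcases hz with rfl | rfl | rfl
  · exact absurd hzC (hS.disjoint.notMem_of_mem_left hv)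
  · exact ⟨z, hzC, y, hvx, hvy, hxy.symm⟩
  · exact ⟨z, hzC, x, hvy, hvx, hxy⟩

variable (hsub : Subcubic G)
include hsub

theorem mem_of_adj (hv : v ∈ S) (hvw : G.Adj v w) (hw : w ∉ C) : w ∈ S := by
  by_contra hwS
  obtain ⟨x, hx, y, hy, hxy, hvx, hvy⟩ := hS.exists_two_adj v hv
  obtain ⟨a, ha, -, hva, -⟩ :=
    hS.exists_mem_adj_of_degree_eq_three hC htri hv (hS.degree_eq_three_of_adj hsub hv hwS hvw)
  rcases hsub.eq_or_eq_or_eq_of_adj hvx hvy hvw hxy (ne_of_mem_of_not_mem hx hwS)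
    (ne_of_mem_of_not_mem hy hwS) hva with rfl | rfl | rfl
  exacts [hS.disjoint.notMem_of_mem_left hx ha, hS.disjoint.notMem_of_mem_left hy ha, hw ha]

theorem exists_partner (hv : v ∈ S) (ha : a ∈ C) (hva : G.Adj v a) :
    ∃ d ∈ S, G.Adj v d ∧ G.Adj d a := by
  have hdeg := hS.degree_eq_three_of_adj hsub hv (hS.disjoint.notMem_of_mem_right ha) hva
  obtain ⟨a', ha', d, hva', hvd, hda'⟩ := hS.exists_mem_adj_of_degree_eq_three hC htri hv hdeg
  obtain rfl := hC.isTwoPacking.eq_of_adj_of_adj ha ha' hva.symm hva'.symm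
  exact ⟨d, hS.mem_of_adj hC htri hsub hv hvd fun hd => hC.isTwoPacking.not_adj hd ha hda',
    hvd, hda'⟩

theorem isTriangleHittingPacking_exchange (hsat : Saturated G 2) (hb : b ∈ S)
    (hexch : IsExchangeable G C b) : IsTriangleHittingPacking G (exchange G C b) := by
  classical
  refine ⟨hC.isTwoPacking.exchange (hS.disjoint.notMem_of_mem_left hb) hexch, fun T hT => ?_⟩
  obtain ⟨a, haT, ha⟩ := hC.exists_mem_of_isNClique T hT
  by_cases! hba : ¬ G.Adj b a
  · exact ⟨a, haT, .inr ⟨ha, hba⟩⟩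
  suffices hbT : b ∈ T from ⟨b, hbT, .inl rfl⟩
  have degree_eq_three {v : V} (hv : v ∈ S) (hva : G.Adj v a) : G.degree v = 3 :=
    hS.degree_eq_three_of_adj hsub hv (hS.disjoint.notMem_of_mem_right ha) hva
  obtain ⟨d, hd, hbd, hda⟩ := hS.exists_partner hC htri hsub hb ha hba
  obtain ⟨e, he, heT, hea⟩ := hsub.exists_mem_mem_ne_of_isNClique
    (is3Clique_triple_iff.2 ⟨hba, hbd, hda.symm⟩) hT (by simp) haT
  simp only [Finset.mem_insert, Finset.mem_singleton] at he
  rcases he with rfl | rfl | rfl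
  · exact heT
  · exact absurd rfl hea
  · obtain ⟨y, hyT, hay, hey⟩ := exists_adj_adj_of_isNClique_three hT haT heT
    have hy : y ∈ S :=
      hS.mem_of_adj hC htri hsub hd hey fun hy => hC.isTwoPacking.not_adj ha hy hay
    obtain rfl : b = y := hsat.eq_of_common_neighbors hsub hda.symm hba.symm hbd.symm hay hey
      (degree_eq_three hb hba) (degree_eq_three hy hay.symm)
    exact hyT

theorem even_ncard (hsat : Saturated G 2) (hnbr : ∀ v ∈ S, ∃ a ∈ C, G.Adj v a) :
    Even S.ncard := by
  classical
  -- Matching each vertex of `S` with the one forming a triangle with it and a vertex of `C`.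
  let M : G.Subgraph :=
    { verts := S
      Adj := fun v w => v ∈ S ∧ w ∈ S ∧ G.Adj v w ∧ ∃ a ∈ C, G.Adj v a ∧ G.Adj w a
      adj_sub := fun h => h.2.2.1
      edge_vert := fun h => h.1
      symm := ⟨fun _ _ ⟨hv, hw, hvw, a, ha, hva, hwa⟩ => ⟨hw, hv, hvw.symm, a, ha, hwa, hva⟩⟩ }
  have hM : M.IsMatching := by
    intro v hv
    obtain ⟨a, ha, hva⟩ := hnbr v hv
    have degree_eq_three {w : V} (hw : w ∈ S) (hwa : G.Adj w a) : G.degree w = 3 :=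
      hS.degree_eq_three_of_adj hsub hw (hS.disjoint.notMem_of_mem_right ha) hwa
    obtain ⟨d, hd, hvd, hda⟩ := hS.exists_partner hC htri hsub hv ha hva
    refine ⟨d, ⟨hv, hd, hvd, a, ha, hva, hda⟩, ?_⟩
    rintro w ⟨-, hw, hvw, a', ha', hva', hwa'⟩
    obtain rfl := hC.isTwoPacking.eq_of_adj_of_adj ha ha' hva.symm hva'.symm
    exact hsat.eq_of_common_neighbors hsub hva hvw hwa'.symm hvd hda.symm
      (degree_eq_three hw hwa') (degree_eq_three hd hda)
  have heven := hM.even_card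
  rwa [← Set.ncard_eq_toFinset_card'] at heven

theorem exists_isExchangeable (hsat : Saturated G 2) (hodd : Odd S.ncard) :
    ∃ b ∈ S, IsExchangeable G C b := by
  obtain ⟨b, hb, hb_nadj⟩ : ∃ b ∈ S, ∀ a ∈ C, ¬ G.Adj b a := by
    by_contra! hnbr
    exact Nat.not_even_iff_odd.2 hodd (hS.even_ncard hC htri hsub hsat hnbr)
  -- If `b` is not exchangeable, then a neighbor `z` of `b` in `S` with a neighbor in `C` is.
  by_cases hexch : IsExchangeable G C b
  · exact ⟨b, hb, hexch⟩
  simp only [IsExchangeable, not_forall] at hexch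
  obtain ⟨z, hz, hbz, a, ha, haz, -⟩ := hexch
  have hzS : z ∈ S := hS.mem_of_adj hC htri hsub hb hbz hz
  obtain ⟨d, hd, hzd, hda⟩ := hS.exists_partner hC htri hsub hzS ha haz.symm
  refine ⟨z, hzS, fun y hy hzy x hx hxy => ?_⟩
  have hbd : b ≠ d := fun h => hb_nadj a ha (h ▸ hda)
  have hba : b ≠ a := ne_of_mem_of_not_mem hb (hS.disjoint.notMem_of_mem_right ha)
  rcases hsub.eq_or_eq_or_eq_of_adj hbz.symm hzd haz.symm hbd hba hda.ne hzy with rfl | rfl | rfl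
  · exact absurd hxy.symm (hb_nadj x hx)
  · exact hC.isTwoPacking.eq_of_adj_of_adj hx ha hxy hda.symm ▸ haz
  · exact absurd ha hy

theorem notMem_of_isCycle_of_notMem_exchange (hsat : Saturated G 2) (hb : b ∈ S) {u : V}
    {c : G.Walk u u} (hc : c.IsCycle) (havoid : ∀ v ∈ c.support, v ∉ exchange G C b) :
    ∀ v ∈ c.support, v ∉ C := by
  intro a hac ha
  have adj_of_mem {v : V} (hv : v ∈ c.support) (hvC : v ∈ C) : G.Adj b v := by
    by_contra h
    exact havoid v hv (.inr ⟨hvC, h⟩)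
  have hb_notMem : b ∉ c.support := fun h => havoid b h (.inl rfl)
  have hba : G.Adj b a := adj_of_mem hac ha
  have haS : a ∉ S := hS.disjoint.notMem_of_mem_right ha
  obtain ⟨d, hd, hbd, hda⟩ := hS.exists_partner hC htri hsub hb ha hba
  have hdc : d ∈ c.support := by
    obtain ⟨x, hx, y, hy, hxy, hax, hay⟩ := exists_two_adj_of_mem_support_isCycle hc hac
    rcases hsub.eq_or_eq_or_eq_of_adj hba.symm hax hay (ne_of_mem_of_not_mem hx hb_notMem).symm
      (ne_of_mem_of_not_mem hy hb_notMem).symm hxy hda.symm with rfl | rfl | rfl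
    exacts [absurd rfl hbd.ne, hx, hy]
  obtain ⟨p, hp, q, hq, hpq_mem, hpq⟩ :=
    exists_boundary_edge_ne_of_isTrail hc.isTrail hdc hd hac haS s(d, a)
  have hpq_adj : G.Adj p q := c.adj_of_mem_edges hpq_mem
  have hqC : q ∈ C := by
    by_contra hqC
    exact hq (hS.mem_of_adj hC htri hsub hp hpq_adj hqC)
  obtain rfl : q = a := hC.isTwoPacking.eq_of_adj_of_adj hqC ha
    (adj_of_mem (c.snd_mem_support_of_mem_edges hpq_mem) hqC).symm hba.symm
  have degree_eq_three {v : V} (hv : v ∈ S) (hvq : G.Adj v q) : G.degree v = 3 :=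
    hS.degree_eq_three_of_adj hsub hv hq hvq
  exact hsat.degree_ne_three_of_adj hsub hba.symm hda.symm hpq_adj.symm hbd.ne
    (ne_of_mem_of_not_mem (c.fst_mem_support_of_mem_edges hpq_mem) hb_notMem).symm
    (fun h => hpq (h ▸ rfl)) (degree_eq_three hb hba) (degree_eq_three hd hda)
    (degree_eq_three hp hpq_adj)

theorem oddCycleVertices_exchange_ssubset (hsat : Saturated G 2) (hSC : S ⊆ oddCycleVertices G C)
    (hb : b ∈ S) : oddCycleVertices G (exchange G C b) ⊂ oddCycleVertices G C := by
  refine (Set.ssubset_iff_of_subset ?_).2 ⟨b, hSC hb, ?_⟩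
  · rintro v ⟨u, c, hc, hodd, havoid, hv⟩
    exact ⟨u, c, hc, hodd,
      hS.notMem_of_isCycle_of_notMem_exchange hC htri hsub hsat hb hc havoid, hv⟩
  · rintro ⟨u, c, -, -, havoid, hbc⟩
    exact havoid b hbc (.inl rfl)

end IsCoreAvoiding

theorem exists_isTriangleHittingPacking_colorable_two (hsub : Subcubic G) (hsat : Saturated G 2)
    (htri : ∀ v : V, G.degree v = 3 → ∃ a b : V, G.Adj v a ∧ G.Adj v b ∧ G.Adj a b) :
    ∃ C, IsTriangleHittingPacking G C ∧ (G.induce Cᶜ).Colorable 2 := by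
  obtain ⟨C, hC, hmin⟩ := (Set.toFinite {C | IsTriangleHittingPacking G C}).exists_minimalFor
    (oddCycleVertices G) _ (exists_isTriangleHittingPacking hsub hsat)
  refine ⟨C, hC, colorable_two_of_oddCycleVertices_eq_empty
    (Set.eq_empty_of_forall_notMem fun v hv => ?_)⟩
  obtain ⟨u, c, hc, hodd, havoid, -⟩ := hv
  have hS := isCoreAvoiding_support hc havoid
  obtain ⟨b, hb, hexch⟩ := hS.exists_isExchangeable hC htri hsub hsat
    (by rwa [ncard_support_of_isCycle hc])
  have hlt := hS.oddCycleVertices_exchange_ssubset hC htri hsub hsat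
    (fun w hw => ⟨u, c, hc, hodd, havoid, hw⟩) hb
  exact hlt.not_ge (hmin (hS.isTriangleHittingPacking_exchange hC htri hsub hsat hb hexch) hlt.le)

end Exchange

/-- Every 2-saturated subcubic graph in which every 3-vertex lies on a triangle
admits a (1,1,2)-packing coloring. -/
theorem stmt_10 {V : Type*} [Fintype V] (G : SimpleGraph V) [DecidableRel G.Adj]
    (hsub : Subcubic G) (hsat : Saturated G 2)
    (hgirth : ∀ v : V, G.degree v = 3 → ∃ a b : V, G.Adj v a ∧ G.Adj v b ∧ G.Adj a b) :
    ∃ c : V → Fin 3, IsPackingColoring G ![1, 1, 2] c := by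
  obtain ⟨C, hC, hcolorable⟩ := exists_isTriangleHittingPacking_colorable_two hsub hsat hgirth
  have hcolors : (![1, 1, 2] : Fin 3 → ℕ) = Fin.snoc (fun _ : Fin 2 => 1) 2 := by decide
  rw [hcolors]
  exact hC.isTwoPacking.exists_isPackingColoring hcolorable
end

section
/- Every 2-saturated subcubic graph in which every 3-vertex lies on a triangle admits a (1,2,2,2)-packing coloring. -/
open SimpleGraph

/-!
The 3-vertices can be covered by pairwise disjoint triangles. Deleting the edges of these triangles
leaves a graph of maximum degree two, the link graph, in which a triangle vertex keeps at most one
neighbor; hence each component contains at most two triangle vertices. A triangle is full if all its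
vertices are 3-vertices; any other triangle has a vertex of degree two, its apex. By Hall's theorem
one can choose in every triangle a root different from the apex, with all roots in distinct
components of the link graph.

The color of radius one is given to a maximal independent set with at most one vertex on each
triangle, containing the roots of the full triangles and the link neighbors of the other roots,
together with some apexes. Among the remaining vertices, those on full triangles conflict along the
union of two matchings, so two colors of radius two suffice for them, and the neighbors of full
triangles on no triangle of the cover do not conflict with each other and get the third color. Every
vertex left, with the apexes taken last, conflicts with at most two vertices already colored.
-/

/-! ### Two-colorings from involutions -/

section Involution

variable {α : Type*}

theorem exists_bool_coloring_of_involutive {f : α → α} (hf : f.Involutive) (hne : ∀ x, f x ≠ x) :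
    ∃ c : α → Bool, ∀ x, c (f x) = !c x := by
  classical
  refine ⟨fun x => decide (WellOrderingRel x (f x)), fun x => ?_⟩
  rcases trichotomous_of WellOrderingRel x (f x) with h | h | h
  · simp [hf x, h, asymm_of WellOrderingRel h]
  · exact (hne x h.symm).elim
  · simp [hf x, h, asymm_of WellOrderingRel h]

theorem apply_zpow_mul_of_involutive {f g : Equiv.Perm α} (hf : Function.Involutive f)
    (hg : Function.Involutive g) (k : ℤ) (x : α) :
    f (((f * g) ^ k) x) = ((f * g) ^ (-k)) (f x) := by
  have hff : f * f = 1 := Equiv.ext hf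
  have hgg : g * g = 1 := Equiv.ext hg
  have hconj : f * (f * g) * f⁻¹ = (f * g)⁻¹ := by
    rw [← mul_assoc, hff, one_mul, mul_inv_rev, inv_eq_of_mul_eq_one_left hgg]
  have hpow : f * (f * g) ^ k = (f * g) ^ (-k) * f := by
    rw [zpow_neg, ← inv_zpow, ← hconj, conj_zpow, inv_mul_cancel_right]
  exact congrArg (· x) hpow

theorem not_sameCycle_mul_apply_of_involutive {f g : Equiv.Perm α} (hf : Function.Involutive f)
    (hg : Function.Involutive g) (hf' : ∀ x, f x ≠ x) (hg' : ∀ x, g x ≠ x) (x : α) :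
    ¬ (f * g).SameCycle x (f x) := by
  rintro ⟨k, hk⟩
  obtain ⟨j, rfl | rfl⟩ := Int.even_or_odd' k
  · apply hf' (((f * g) ^ j) x)
    rw [apply_zpow_mul_of_involutive hf hg, ← hk, ← Equiv.Perm.mul_apply, ← zpow_add]
    congr 2; ring
  · apply hg' (((f * g) ^ j) x)
    apply f.injective
    calc f (g (((f * g) ^ j) x)) = ((f * g) ^ (1 + j)) x := by rw [zpow_one_add]; rfl
      _ = ((f * g) ^ (-j + (2 * j + 1))) x := by congr 2; ring
      _ = ((f * g) ^ (-j)) (f x) := by rw [zpow_add, Equiv.Perm.mul_apply, hk]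
      _ = f (((f * g) ^ j) x) := (apply_zpow_mul_of_involutive hf hg j x).symm

/-- The cycles of `f * g` are permuted by `f` without fixed points: constant on each cycle, a
coloring alternating under `f` also alternates under `g = f * (f * g)`. -/
theorem exists_bool_coloring_of_involutive_of_involutive {f g : Equiv.Perm α}
    (hf : Function.Involutive f) (hg : Function.Involutive g) (hf' : ∀ x, f x ≠ x)
    (hg' : ∀ x, g x ≠ x) : ∃ c : α → Bool, ∀ x, c (f x) = !c x ∧ c (g x) = !c x := by
  let cycles := Equiv.Perm.SameCycle.setoid (f * g)
  have f_sameCycle : ∀ x y, (f * g).SameCycle x y → (f * g).SameCycle (f x) (f y) := by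
    rintro x _ ⟨k, rfl⟩
    exact ⟨-k, (apply_zpow_mul_of_involutive hf hg k x).symm⟩
  let F : Quotient cycles → Quotient cycles := Quotient.map f f_sameCycle
  have F_involutive : F.Involutive := by
    rintro ⟨x⟩
    exact congrArg (Quotient.mk cycles) (hf x)
  have F_ne : ∀ q, F q ≠ q := by
    rintro ⟨x⟩ h
    exact not_sameCycle_mul_apply_of_involutive hf hg hf' hg' x (Quotient.exact h).symm
  obtain ⟨c, hc⟩ := exists_bool_coloring_of_involutive F_involutive F_ne
  have alternates_f : ∀ x, c ⟦f x⟧ = !c ⟦x⟧ := fun x => hc ⟦x⟧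
  refine ⟨fun x => c ⟦x⟧, fun x => ⟨alternates_f x, ?_⟩⟩
  change c ⟦g x⟧ = !c ⟦x⟧
  have cycle_eq : (⟦f (g x)⟧ : Quotient cycles) = ⟦x⟧ :=
    Quotient.sound (Equiv.Perm.sameCycle_apply_left.2 (Equiv.Perm.SameCycle.refl (f * g) x))
  rw [← Bool.not_not (c ⟦g x⟧), ← alternates_f, cycle_eq]

end Involution

section Matching

variable {V : Type*}

theorem exists_involutive_of_subsingleton_neighborSet {M : SimpleGraph V}
    (hM : ∀ v, (M.neighborSet v).Subsingleton) :
    ∃ f : V × Bool → V × Bool, f.Involutive ∧ (∀ p, f p ≠ p) ∧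
      ∀ v w b, M.Adj v w → f (v, b) = (w, b) := by
  classical
  let f : V × Bool → V × Bool := fun p =>
    if h : ∃ w, M.Adj p.1 w then (h.choose, p.2) else (p.1, !p.2)
  have f_of_adj : ∀ v w b, M.Adj v w → f (v, b) = (w, b) := by
    intro v w b hvw
    have h : ∃ w, M.Adj v w := ⟨w, hvw⟩
    simp only [f, dif_pos h]
    rw [hM v h.choose_spec hvw]
  have f_of_not_adj : ∀ v b, (¬ ∃ w, M.Adj v w) → f (v, b) = (v, !b) := fun v b h => dif_neg h
  refine ⟨f, ?_, ?_, f_of_adj⟩ <;> rintro ⟨v, b⟩ <;> by_cases hv : ∃ w, M.Adj v w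
  · obtain ⟨w, hw⟩ := hv
    rw [f_of_adj v w b hw, f_of_adj w v b hw.symm]
  · rw [f_of_not_adj v b hv, f_of_not_adj v _ hv, Bool.not_not]
  · obtain ⟨w, hw⟩ := hv
    simpa [f_of_adj v w b hw] using hw.ne'
  · simp [f_of_not_adj v b hv]

theorem colorable_two_sup_of_subsingleton_neighborSet {M₁ M₂ : SimpleGraph V}
    (h₁ : ∀ v, (M₁.neighborSet v).Subsingleton) (h₂ : ∀ v, (M₂.neighborSet v).Subsingleton) :
    (M₁ ⊔ M₂).Colorable 2 := by
  obtain ⟨f, hf, hf', f_adj⟩ := exists_involutive_of_subsingleton_neighborSet h₁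
  obtain ⟨g, hg, hg', g_adj⟩ := exists_involutive_of_subsingleton_neighborSet h₂
  obtain ⟨c, hc⟩ := exists_bool_coloring_of_involutive_of_involutive (f := hf.toPerm)
    (g := hg.toPerm) hf hg hf' hg'
  refine (Coloring.mk (fun v => c (v, false)) ?_).colorable
  rintro v w (hvw | hvw) heq
  · have alternates_f := (hc (v, false)).1
    rw [hf.coe_toPerm, f_adj v w false hvw] at alternates_f
    simp [heq] at alternates_f
  · have alternates_g := (hc (v, false)).2
    rw [hg.coe_toPerm, g_adj v w false hvw] at alternates_g
    simp [heq] at alternates_g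

end Matching

/-! ### Greedy colorings and packing colorings -/

section Colorable

variable {V : Type*} {H : SimpleGraph V} {n : ℕ}

theorem colorable_induce_insert {S : Set V} {u : V} (hS : (H.induce S).Colorable n)
    (hu : (H.neighborSet u ∩ S).encard < n) : (H.induce (insert u S)).Colorable n := by
  classical
  by_cases huS : u ∈ S
  · rwa [Set.insert_eq_of_mem huS]
  obtain ⟨c⟩ := hS
  let used : Set (Fin n) := c '' {v : S | H.Adj u v}
  obtain ⟨k, hk⟩ : ∃ k, k ∉ used := by
    by_contra! hall
    have used_le : used.encard ≤ (H.neighborSet u ∩ S).encard :=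
      (Set.encard_image_le _ _).trans <|
        Set.encard_le_encard_of_injOn (f := Subtype.val) (fun v hv => ⟨hv, v.2⟩)
          Subtype.val_injective.injOn
    rw [Set.eq_univ_of_forall hall, Set.encard_univ, ENat.card_eq_coe_fintype_card,
      Fintype.card_fin] at used_le
    exact (used_le.trans_lt hu).false
  have color_ne : ∀ v : S, H.Adj u v → c v ≠ k := fun v huv h => hk ⟨v, huv, h⟩
  refine ⟨Coloring.mk (fun v => if h : v.1 ∈ S then c ⟨v, h⟩ else k) ?_⟩
  rintro ⟨v, rfl | hv⟩ ⟨w, rfl | hw⟩ hvw <;> rw [comap_adj] at hvw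
  · exact (hvw.ne rfl).elim
  · simpa [huS, hw] using (color_ne ⟨w, hw⟩ hvw).symm
  · simpa [huS, hv] using color_ne ⟨v, hv⟩ hvw.symm
  · simpa [hv, hw] using c.valid (v := ⟨v, hv⟩) (w := ⟨w, hw⟩) hvw

theorem colorable_induce_of_encard_neighborSet_lt {S T : Set V} (hS : (H.induce S).Colorable n)
    (hST : S ⊆ T) (hfin : (T \ S).Finite)
    (hdeg : ∀ u ∈ T \ S, (H.neighborSet u ∩ T).encard < n) : (H.induce T).Colorable n := by
  have union_colorable : (H.induce (S ∪ T \ S)).Colorable n := by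
    refine Set.Finite.induction_on_subset (motive := fun A _ => (H.induce (S ∪ A)).Colorable n)
      _ hfin (by rwa [Set.union_empty]) fun {u A} hu hA _ ih => ?_
    rw [Set.union_insert]
    refine colorable_induce_insert ih ((Set.encard_le_encard ?_).trans_lt (hdeg u hu))
    exact Set.inter_subset_inter_right _ (Set.union_subset hST (hA.trans Set.sdiff_subset))
  rwa [Set.union_sdiff_cancel hST] at union_colorable

theorem colorable_induce_union_of_isIndepSet {B D : Set V} (hB : (H.induce B).Colorable n)
    (hD : H.IsIndepSet D) : (H.induce (D ∪ B)).Colorable (n + 1) := by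
  classical
  obtain ⟨c⟩ := hB
  refine ⟨Coloring.mk
    (fun v => if h : v.1 ∈ B then (c ⟨v, h⟩).castSucc else Fin.last n) ?_⟩
  rintro ⟨v, hv⟩ ⟨w, hw⟩ hvw
  rw [comap_adj] at hvw
  by_cases hvB : v ∈ B <;> by_cases hwB : w ∈ B
  · simpa [hvB, hwB] using c.valid (v := ⟨v, hvB⟩) (w := ⟨w, hwB⟩) hvw
  · simp [hvB, hwB, Fin.castSucc_ne_last]
  · simp [hvB, hwB, (Fin.castSucc_ne_last _).symm]
  · exact (hD (hv.resolve_right hvB) (hw.resolve_right hwB) hvw.ne hvw).elim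

end Colorable

theorem subsingleton_sdiff_singleton_of_encard_le_two {α : Type*} {s : Set α} {a : α}
    (hs : s.encard ≤ 2) (ha : a ∈ s) : (s \ {a}).Subsingleton := by
  rw [← Set.encard_le_one_iff_subsingleton, ← ENat.add_le_add_iff_right ENat.one_ne_top,
    Set.encard_sdiff_singleton_add_one ha, one_add_one_eq_two]
  exact hs

theorem encard_le_encard_of_subset_biUnion_subsingleton {α β : Type*} {s : Set α} {t : Set β}
    {f : α → Set β} (ht : t ⊆ ⋃ a ∈ s, f a) (hf : ∀ a ∈ s, (f a).Subsingleton) :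
    t.encard ≤ s.encard := by
  have covered : ∀ b : t, ∃ a : s, b.1 ∈ f a := fun b => by simpa using ht b.2
  choose a ha using covered
  refine ENat.card_le_card_of_injective (f := a) fun b b' h => ?_
  exact Subtype.ext (hf (a b) (a b).2 (ha b) (h ▸ ha b'))

theorem exists_isIndepSet_superset_dominating {V : Type*} [Finite V] {G : SimpleGraph V}
    {S : Set V} (hS : G.IsIndepSet S) (W : Set V) :
    ∃ I, S ⊆ I ∧ I ⊆ S ∪ W ∧ G.IsIndepSet I ∧ ∀ w ∈ W, w ∉ I → ∃ a ∈ I, G.Adj w a := by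
  obtain ⟨I, hSI, hI⟩ := Set.Finite.exists_le_maximal
    (s := {I : Set V | I ⊆ S ∪ W ∧ G.IsIndepSet I}) (Set.toFinite _)
    ⟨Set.subset_union_left, hS⟩
  refine ⟨I, hSI, hI.prop.1, hI.prop.2, fun w hw hwI => ?_⟩
  by_contra! hno
  have hinsert : insert w I ⊆ S ∪ W ∧ G.IsIndepSet (insert w I) := by
    refine ⟨Set.insert_subset (Or.inr hw) hI.prop.1, ?_⟩
    exact hI.prop.2.insert fun a ha _ => ⟨hno a ha, fun h => hno a ha h.symm⟩
  exact hwI (hI.le_of_ge hinsert (Set.subset_insert w I) (Set.mem_insert w I))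

/-- The graph joining two vertices outside `I` that are at distance one or two in `G`: its proper
colorings extend the color class `I` to a packing coloring with all further radii equal to two. -/
def conflictGraph {V : Type*} (G : SimpleGraph V) (I : Set V) : SimpleGraph V where
  Adj u v := u ≠ v ∧ u ∉ I ∧ v ∉ I ∧ (G.Adj u v ∨ (G.commonNeighbors u v).Nonempty)
  symm := ⟨fun u v ⟨hne, hu, hv, h⟩ =>
    ⟨hne.symm, hv, hu, by rwa [G.adj_comm, G.commonNeighbors_symm]⟩⟩
  loopless := ⟨fun _ h => h.1 rfl⟩

theorem exists_isPackingColoring_of_colorable_conflictGraph {V : Type*} {G : SimpleGraph V}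
    {I : Set V} {n : ℕ} (hI : G.IsIndepSet I) (hcol : (conflictGraph G I).Colorable n) :
    ∃ c : V → Fin (n + 1), IsPackingColoring G (Fin.cons 1 fun _ => 2) c := by
  classical
  obtain ⟨c⟩ := hcol
  refine ⟨fun v => if v ∈ I then 0 else (c v).succ, fun u v hne hc huv => ?_⟩
  by_cases hu : u ∈ I <;> by_cases hv : v ∈ I
  · have not_adj : ¬ G.Adj u v := hI hu hv hne
    simpa [hu] using huv.one_lt_dist_of_ne_of_not_adj hne not_adj
  · simp [hu, hv, (Fin.succ_ne_zero _).symm] at hc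
  · simp [hu, hv] at hc
  · have color_eq : c u = c v := by simpa [hu, hv] using hc
    have not_conflict : ¬ (G.Adj u v ∨ (G.commonNeighbors u v).Nonempty) := fun h =>
      c.valid ⟨hne, hu, hv, h⟩ color_eq
    rw [not_or, Set.not_nonempty_iff_eq_empty] at not_conflict
    have two_lt : 2 < G.edist u v := two_lt_edist_iff.2 ⟨hne, not_conflict⟩
    rw [← huv.coe_dist_eq_edist] at two_lt
    simpa [hu] using Nat.cast_lt.1 two_lt

/-! ### Systems of representatives in graphs of maximum degree two -/

theorem card_degree_le_one_le_two_of_connected {V : Type*} [Fintype V] {G : SimpleGraph V}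
    [DecidableRel G.Adj] (hG : G.Connected) (hdeg : ∀ v, G.degree v ≤ 2) :
    (Finset.univ.filter fun v => G.degree v ≤ 1).card ≤ 2 := by
  classical
  have edges_ge : Fintype.card V ≤ G.edgeFinset.card + 1 := by
    rw [← Nat.card_eq_fintype_card, edgeFinset, Set.toFinset_card, ← Nat.card_eq_fintype_card]
    exact hG.card_vert_le_card_edgeSet_add_one
  have degree_sum_le : ∑ v, (G.degree v + if G.degree v ≤ 1 then 1 else 0) ≤ ∑ _v : V, 2 :=
    Finset.sum_le_sum fun v _ => by have := hdeg v; split_ifs <;> omega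
  rw [Finset.sum_add_distrib, G.sum_degrees_eq_twice_card_edges, ← Finset.card_filter,
    Finset.sum_const, Finset.card_univ, smul_eq_mul] at degree_sum_le
  omega

theorem encard_subsingleton_neighborSet_component_le_two {V : Type*} [Finite V]
    {F : SimpleGraph V} (hF : ∀ v, (F.neighborSet v).encard ≤ 2) (C : F.ConnectedComponent) :
    {v | F.connectedComponentMk v = C ∧ (F.neighborSet v).Subsingleton}.encard ≤ 2 := by
  classical
  have := Fintype.ofFinite V
  have degree_eq : ∀ v : C, (C.toSimpleGraph.degree v : ℕ∞) = (F.neighborSet v).encard := by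
    intro v
    rw [← card_neighborSet_eq_degree, Set.coe_fintypeCard, ← Subtype.val_injective.encard_image]
    congr 1
    ext w
    exact ⟨by rintro ⟨w, hw, rfl⟩; exact hw,
      fun hw => ⟨⟨w, C.mem_supp_of_adj_mem_supp v.2 hw⟩, hw, rfl⟩⟩
  have leaves_le := card_degree_le_one_le_two_of_connected C.connected_toSimpleGraph fun v => by
    exact_mod_cast (degree_eq v).trans_le (hF v)
  have leaves_eq : {v | F.connectedComponentMk v = C ∧ (F.neighborSet v).Subsingleton} =
      Subtype.val '' {v : C | C.toSimpleGraph.degree v ≤ 1} := by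
    ext v
    have : F.connectedComponentMk v = C ↔ v ∈ C := Iff.rfl
    simp [← Set.encard_le_one_iff_subsingleton, ← Nat.cast_le (α := ℕ∞), degree_eq, this,
      and_comm]
  rw [leaves_eq, Subtype.val_injective.encard_image]
  rw [← Nat.cast_le (α := ℕ∞), ← Set.encard_coe_eq_coe_finsetCard] at leaves_le
  simpa using leaves_le

theorem exists_mem_injective_comp_of_encard_fiber_le {ι α β : Type*} {s : ι → Finset α}
    {f : α → β} {n : ℕ} (hn : 0 < n) (hs : Pairwise fun i j => Disjoint (s i) (s j))
    (hcard : ∀ i, n ≤ (s i).card) (hf : ∀ b, {a | (∃ i, a ∈ s i) ∧ f a = b}.encard ≤ n) :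
    ∃ r : ι → α, (∀ i, r i ∈ s i) ∧ (f ∘ r).Injective := by
  classical
  have hall : ∀ A : Finset ι, A.card ≤ (A.biUnion fun i => (s i).image f).card := by
    intro A
    have fiber_le : ∀ b ∈ (A.biUnion s).image f, ((A.biUnion s).filter (f · = b)).card ≤ n := by
      intro b _
      rw [← Nat.cast_le (α := ℕ∞), ← Set.encard_coe_eq_coe_finsetCard]
      refine (Set.encard_le_encard fun a ha => ?_).trans (hf b)
      simp only [Finset.coe_filter, Finset.mem_biUnion, Set.mem_ofPred_eq] at ha
      exact ⟨ha.1.imp fun _ h => h.2, ha.2⟩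
    rw [← Finset.biUnion_image]
    refine Nat.le_of_mul_le_mul_left ?_ hn
    calc n * A.card = ∑ _i ∈ A, n := by rw [Finset.sum_const, smul_eq_mul, mul_comm]
      _ ≤ ∑ i ∈ A, (s i).card := Finset.sum_le_sum fun i _ => hcard i
      _ = (A.biUnion s).card := (Finset.card_biUnion fun i _ j _ hij => hs hij).symm
      _ ≤ n * ((A.biUnion s).image f).card := Finset.card_le_mul_card_image _ _ fiber_le
  obtain ⟨g, g_inj, hg⟩ := (Finset.all_card_le_biUnion_card_iff_exists_injective _).1 hall
  choose r hr hfr using fun i => Finset.mem_image.1 (hg i)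
  exact ⟨r, hr, (funext hfr : f ∘ r = g) ▸ g_inj⟩

/-! ### Disjoint triangles covering the 3-vertices -/

section Clique

variable {V : Type*} {G : SimpleGraph V} {n : ℕ} {T : Finset V} {u x y : V}
  [Fintype (G.neighborSet x)]

theorem neighborFinset_eq_insert_erase_of_isNClique [DecidableEq V]
    (hT : G.IsNClique n T) (hx : x ∈ T) (hu : u ∉ T) (hxu : G.Adj x u) (hdeg : G.degree x ≤ n) :
    G.neighborFinset x = insert u (T.erase x) := by
  have card_eq : (insert u (T.erase x)).card = n := by
    rw [Finset.card_insert_of_notMem (mt Finset.mem_of_mem_erase hu),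
      Finset.card_erase_add_one hx, hT.card_eq]
  refine (Finset.eq_of_subset_of_card_le (fun y hy => ?_) ?_).symm
  · rw [mem_neighborFinset]
    rcases Finset.mem_insert.1 hy with rfl | hy
    · exact hxu
    · exact hT.isClique hx (Finset.mem_of_mem_erase hy) (Finset.ne_of_mem_erase hy).symm
  · rwa [card_eq, card_neighborFinset_eq_degree]

theorem degree_eq_of_isNClique (hT : G.IsNClique n T) (hx : x ∈ T) (hu : u ∉ T) (hxu : G.Adj x u)
    (hdeg : G.degree x ≤ n) : G.degree x = n := by
  classical
  rw [← card_neighborFinset_eq_degree,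
    neighborFinset_eq_insert_erase_of_isNClique hT hx hu hxu hdeg,
    Finset.card_insert_of_notMem (mt Finset.mem_of_mem_erase hu), Finset.card_erase_add_one hx,
    hT.card_eq]

theorem eq_or_mem_of_isNClique (hT : G.IsNClique n T) (hx : x ∈ T) (hu : u ∉ T) (hxu : G.Adj x u)
    (hdeg : G.degree x ≤ n) (hxy : G.Adj x y) : y = u ∨ y ∈ T := by
  classical
  have hy := (G.mem_neighborFinset x y).2 hxy
  rw [neighborFinset_eq_insert_erase_of_isNClique hT hx hu hxu hdeg, Finset.mem_insert] at hy
  exact hy.imp_right Finset.mem_of_mem_erase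

theorem erase_subset_of_isClique_of_isNClique [DecidableEq V] {K : Finset V}
    (hT : G.IsNClique n T) (hK : G.IsClique K) (hxT : x ∈ T) (hxK : x ∈ K) (huT : u ∉ T)
    (huK : u ∈ K) (hdeg : G.degree x ≤ n) : K.erase u ⊆ T := by
  have hxu : G.Adj x u := hK hxK huK (ne_of_mem_of_not_mem hxT huT)
  intro y hy
  obtain ⟨hyu, hyK⟩ := Finset.mem_erase.1 hy
  by_cases hyx : y = x
  · exact hyx ▸ hxT
  · exact (eq_or_mem_of_isNClique hT hxT huT hxu hdeg (hK hxK hyK (Ne.symm hyx))).resolve_left hyu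

end Clique

section Triangles

variable {V : Type*} [Fintype V] {G : SimpleGraph V} [DecidableRel G.Adj]

theorem exists_adj_degree_ne_three (hsat : Saturated G 2) {v : V} (hv : G.degree v = 3) :
    ∃ w, G.Adj v w ∧ G.degree w ≠ 3 := by
  by_contra! hall
  have filter_eq : (G.neighborFinset v).filter (fun u => G.degree u = 3) = G.neighborFinset v :=
    Finset.filter_true_of_mem fun u hu => hall u ((G.mem_neighborFinset v u).1 hu)
  have card_le := hsat v hv
  rw [filter_eq, card_neighborFinset_eq_degree, hv] at card_le
  omega

theorem degree_eq_three_iff_mem_of_diamond (hsub : Subcubic G) (hsat : Saturated G 2)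
    {T T' : Finset V} (hT : G.IsNClique 3 T) (hT' : G.IsNClique 3 T') {x u w : V} (hxT : x ∈ T)
    (hxT' : x ∈ T') (huT : u ∉ T) (huT' : u ∈ T') (hu : G.degree u = 3) (hw : w ∈ T ∨ w ∈ T') :
    G.degree w = 3 ↔ w ∈ T' := by
  classical
  have hxu : G.Adj x u := hT'.isClique hxT' huT' (ne_of_mem_of_not_mem hxT huT)
  have erase_sub : T'.erase u ⊆ T :=
    erase_subset_of_isClique_of_isNClique hT hT'.isClique hxT hxT' huT huT' (hsub x)
  have degree_T' : ∀ y ∈ T', G.degree y = 3 := by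
    intro y hy
    by_cases hyu : y = u
    · exact hyu ▸ hu
    · exact degree_eq_of_isNClique hT (erase_sub (Finset.mem_erase.2 ⟨hyu, hy⟩)) huT
        (hT'.isClique hy huT' hyu) (hsub y)
  obtain ⟨t, hxt, ht⟩ := exists_adj_degree_ne_three hsat (degree_T' x hxT')
  have ht_mem : t ∈ T \ T' := by
    have htT' : t ∉ T' := mt (degree_T' t) ht
    refine Finset.mem_sdiff.2 ⟨?_, htT'⟩
    exact (eq_or_mem_of_isNClique hT hxT huT hxu (hsub x) hxt).resolve_left
      (ne_of_mem_of_not_mem huT' htT').symm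
  have card_sdiff_le : (T \ T').card ≤ 1 := by
    have two_le := Finset.card_le_card (Finset.subset_inter (T'.erase_subset u) erase_sub)
    rw [Finset.card_erase_of_mem huT', hT'.card_eq] at two_le
    rw [Finset.card_sdiff, hT.card_eq]
    omega
  refine ⟨fun hw3 => ?_, degree_T' w⟩
  by_contra hwT'
  have hw_mem : w ∈ T \ T' := Finset.mem_sdiff.2 ⟨hw.resolve_right hwT', hwT'⟩
  exact ht (Finset.card_le_one.1 card_sdiff_le w hw_mem t ht_mem ▸ hw3)

variable (G) in
/-- All vertices of the triangle `T` are 3-vertices. -/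
def IsFull (T : Finset V) : Prop := ∀ v ∈ T, G.degree v = 3

variable (G) in
/-- The triangles allowed in a disjoint cover of the 3-vertices: the full ones, and those that
meet no full one. -/
def IsAdmissible (T : Finset V) : Prop :=
  G.IsNClique 3 T ∧
    (IsFull G T ∨ ∀ T', G.IsNClique 3 T' → IsFull G T' → Disjoint T T')

theorem exists_isAdmissible_mem (hsub : Subcubic G) (hsat : Saturated G 2) {T : Finset V}
    {v : V} (hT : G.IsNClique 3 T) (hvT : v ∈ T) (hv : G.degree v = 3) :
    ∃ T', IsAdmissible G T' ∧ v ∈ T' := by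
  by_cases hadm : ∀ T', G.IsNClique 3 T' → IsFull G T' → Disjoint T T'
  · exact ⟨T, ⟨hT, Or.inr hadm⟩, hvT⟩
  push Not at hadm
  obtain ⟨T', hT', hfull, hmeet⟩ := hadm
  obtain ⟨x, hxT, hxT'⟩ := Finset.not_disjoint_iff.1 hmeet
  by_cases hvT' : v ∈ T'
  · exact ⟨T', ⟨hT', Or.inl hfull⟩, hvT'⟩
  · refine ⟨T, ⟨hT, Or.inl fun w hw => ?_⟩, hvT⟩
    exact (degree_eq_three_iff_mem_of_diamond hsub hsat hT' hT hxT' hxT hvT' hvT hv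
      (Or.inr hw)).2 hw

theorem IsAdmissible.disjoint_of_mem_of_notMem (hsub : Subcubic G) (hsat : Saturated G 2)
    {T T' : Finset V} {v : V} (hT : IsAdmissible G T) (hT' : IsAdmissible G T') (hvT : v ∈ T)
    (hvT' : v ∉ T') (hv : G.degree v = 3) : Disjoint T T' := by
  by_contra hmeet
  obtain ⟨x, hxT, hxT'⟩ := Finset.not_disjoint_iff.1 hmeet
  have degree_iff {w : V} (hw : w ∈ T' ∨ w ∈ T) : G.degree w = 3 ↔ w ∈ T :=
    degree_eq_three_iff_mem_of_diamond hsub hsat hT'.1 hT.1 hxT' hxT hvT' hvT hv hw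
  rcases hT'.2 with hfull | hdisj
  · have T'_sub : T' ⊆ T := fun w hw => (degree_iff (Or.inl hw)).1 (hfull w hw)
    have T'_eq := Finset.eq_of_subset_of_card_le T'_sub (hT.1.card_eq.trans hT'.1.card_eq.symm).le
    exact hvT' (T'_eq ▸ hvT)
  · exact hmeet (hdisj T hT.1 fun w hw => (degree_iff (Or.inr hw)).2 hw).symm

theorem exists_disjoint_triangles (hsub : Subcubic G) (hsat : Saturated G 2)
    (htri : ∀ v, G.degree v = 3 → ∃ T, G.IsNClique 3 T ∧ v ∈ T) :
    ∃ 𝒯 : Set (Finset V), (∀ T ∈ 𝒯, G.IsNClique 3 T) ∧ 𝒯.Pairwise Disjoint ∧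
      ∀ v, G.degree v = 3 → ∃ T ∈ 𝒯, v ∈ T := by
  obtain ⟨𝒯, h𝒯⟩ := Set.Finite.exists_maximal
    (s := {𝒯 : Set (Finset V) | (∀ T ∈ 𝒯, IsAdmissible G T) ∧ 𝒯.Pairwise Disjoint})
    (Set.toFinite _) ⟨∅, by simp⟩
  refine ⟨𝒯, fun T hT => (h𝒯.prop.1 T hT).1, h𝒯.prop.2, fun v hv => ?_⟩
  by_contra! hno
  obtain ⟨S, hS, hvS⟩ := htri v hv
  obtain ⟨T, hT, hvT⟩ := exists_isAdmissible_mem hsub hsat hS hvS hv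
  have hdisj : ∀ T' ∈ 𝒯, Disjoint T T' := fun T' hT' =>
    hT.disjoint_of_mem_of_notMem hsub hsat (h𝒯.prop.1 T' hT') hvT (hno T' hT') hv
  have hinsert : (∀ T' ∈ insert T 𝒯, IsAdmissible G T') ∧ (insert T 𝒯).Pairwise Disjoint :=
    ⟨Set.forall_mem_insert.2 ⟨hT, h𝒯.prop.1⟩,
      h𝒯.prop.2.insert fun T' hT' _ => ⟨hdisj T' hT', (hdisj T' hT').symm⟩⟩
  exact hno T (h𝒯.le_of_ge hinsert (Set.subset_insert T 𝒯) (Set.mem_insert T 𝒯)) hvT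

end Triangles

/-! ### Triangle covers and roots -/

/-- A family of pairwise disjoint triangles of `G` containing every 3-vertex. -/
structure TriangleCover {V : Type*} [Fintype V] (G : SimpleGraph V) [DecidableRel G.Adj]
    (ι : Type*) where
  tri : ι → Finset V
  isNClique : ∀ i, G.IsNClique 3 (tri i)
  disjoint : Pairwise fun i j => Disjoint (tri i) (tri j)
  covers : ∀ v, G.degree v = 3 → ∃ i, v ∈ tri i

namespace TriangleCover

variable {V : Type*} [Fintype V] {G : SimpleGraph V} [DecidableRel G.Adj] {ι : Type*}
  (C : TriangleCover G ι)

/-- The vertices on the triangles of the cover. -/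
def covered : Set V := {v | ∃ i, v ∈ C.tri i}

/-- The graph `G` with the edges of the covering triangles removed. It has maximum degree two. -/
def link : SimpleGraph V where
  Adj u v := G.Adj u v ∧ ∀ i, u ∈ C.tri i → v ∉ C.tri i
  symm := ⟨fun _ _ h => ⟨h.1.symm, fun i hv hu => h.2 i hu hv⟩⟩
  loopless := ⟨fun _ h => h.1.ne rfl⟩

variable {C} {i j : ι} {v w e y : V}

theorem eq_of_mem (hi : v ∈ C.tri i) (hj : v ∈ C.tri j) : i = j := by
  by_contra hij
  exact Finset.disjoint_left.1 (C.disjoint hij) hi hj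

theorem link_adj_of_notMem_covered (hv : v ∉ C.covered) (hvw : G.Adj v w) : C.link.Adj v w :=
  ⟨hvw, fun i hi => (hv ⟨i, hi⟩).elim⟩

theorem link_adj_or_mem_tri (hvw : G.Adj v w) :
    C.link.Adj v w ∨ ∃ i, v ∈ C.tri i ∧ w ∈ C.tri i := by
  by_contra! h
  exact h.1 ⟨hvw, h.2⟩

section Subcubic

variable (hsub : Subcubic G)
include hsub

theorem degree_eq_three_of_link_adj (hv : v ∈ C.tri i) (hvw : C.link.Adj v w) :
    G.degree v = 3 :=
  degree_eq_of_isNClique (C.isNClique i) hv (hvw.2 i hv) hvw.1 (hsub v)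

theorem eq_or_mem_tri_of_adj (hv : v ∈ C.tri i) (hvw : C.link.Adj v w) (hvy : G.Adj v y) :
    y = w ∨ y ∈ C.tri i :=
  eq_or_mem_of_isNClique (C.isNClique i) hv (hvw.2 i hv) hvw.1 (hsub v) hvy

theorem subsingleton_link_neighborSet (hv : v ∈ C.covered) :
    (C.link.neighborSet v).Subsingleton := by
  obtain ⟨i, hi⟩ := hv
  exact fun w hw y hy =>
    ((eq_or_mem_tri_of_adj hsub hi hw hy.1).resolve_right (hy.2 i hi)).symm

theorem encard_link_neighborSet_le_two (v : V) : (C.link.neighborSet v).encard ≤ 2 := by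
  by_cases hv : v ∈ C.covered
  · exact (Set.encard_le_one_iff_subsingleton.2 (subsingleton_link_neighborSet hsub hv)).trans
      one_le_two
  · have degree_ne : G.degree v ≠ 3 := mt (C.covers v) hv
    have degree_le : G.degree v ≤ 2 := by have := hsub v; omega
    calc (C.link.neighborSet v).encard ≤ (G.neighborSet v).encard :=
          Set.encard_le_encard fun _ hw => hw.1
      _ = G.degree v := by rw [← card_neighborSet_eq_degree, Set.coe_fintypeCard]
      _ ≤ 2 := by exact_mod_cast degree_le

theorem encard_covered_component_le_two (D : C.link.ConnectedComponent) :
    {v | v ∈ C.covered ∧ C.link.connectedComponentMk v = D}.encard ≤ 2 := by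
  refine le_trans (Set.encard_le_encard fun v hv => ?_) <|
    encard_subsingleton_neighborSet_component_le_two (encard_link_neighborSet_le_two hsub) D
  exact ⟨hv.2, subsingleton_link_neighborSet hsub hv.1⟩

theorem notMem_covered_of_link_adj_of_isFull (hsat : Saturated G 2) (hi : IsFull G (C.tri i))
    (hv : v ∈ C.tri i) (hvw : C.link.Adj v w) : w ∉ C.covered := by
  rintro ⟨j, hj⟩
  obtain ⟨t, hvt, ht⟩ := exists_adj_degree_ne_three hsat (hi v hv)
  rcases eq_or_mem_tri_of_adj hsub hv hvw hvt with rfl | ht_mem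
  · exact ht (degree_eq_three_of_link_adj hsub hj hvw.symm)
  · exact ht (hi t ht_mem)

end Subcubic

end TriangleCover

/-- A triangle cover whose triangles have labeled vertices: the apex of a triangle is not a
3-vertex unless the triangle is full, and the roots lie in distinct components of the link
graph. -/
structure RootedTriangleCover {V : Type*} [Fintype V] (G : SimpleGraph V) [DecidableRel G.Adj]
    (ι : Type*) extends TriangleCover G ι where
  root : ι → V
  mid : ι → V
  apex : ι → V
  mem_tri_iff : ∀ {i v}, v ∈ tri i ↔ v = root i ∨ v = mid i ∨ v = apex i
  root_ne_mid : ∀ i, root i ≠ mid i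
  root_ne_apex : ∀ i, root i ≠ apex i
  mid_ne_apex : ∀ i, mid i ≠ apex i
  degree_apex_ne : ∀ {i}, ¬ IsFull G (tri i) → G.degree (apex i) ≠ 3
  injective_component_root :
    Function.Injective fun i => toTriangleCover.link.connectedComponentMk (root i)

theorem exists_third_of_card_eq_three {α : Type*} {T : Finset α} {a b : α} (hT : T.card = 3)
    (ha : a ∈ T) (hb : b ∈ T) (hab : a ≠ b) :
    ∃ m, a ≠ m ∧ m ≠ b ∧ ∀ {v}, v ∈ T ↔ v = a ∨ v = m ∨ v = b := by
  classical
  have hb' : b ∈ T.erase a := Finset.mem_erase.2 ⟨hab.symm, hb⟩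
  have card_eq : ((T.erase a).erase b).card = 1 := by
    rw [Finset.card_erase_of_mem hb', Finset.card_erase_of_mem ha, hT]
  obtain ⟨m, hm⟩ := Finset.card_eq_one.1 card_eq
  have mem_iff : ∀ v, v ≠ b ∧ v ≠ a ∧ v ∈ T ↔ v = m := fun v => by
    rw [← Finset.mem_singleton, ← hm, Finset.mem_erase, Finset.mem_erase]
  obtain ⟨hmb, hma, -⟩ := (mem_iff m).2 rfl
  refine ⟨m, hma.symm, hmb, fun {v} => ?_⟩
  by_cases hva : v = a
  · simp [hva, ha]
  by_cases hvb : v = b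
  · simp [hvb, hb]
  · simp [hva, hvb, ← mem_iff]

theorem exists_mem_degree_ne_three_of_not_isFull {V : Type*} [Fintype V] {G : SimpleGraph V}
    [DecidableRel G.Adj] {T : Finset V} (hT : T.Nonempty) :
    ∃ a ∈ T, ¬ IsFull G T → G.degree a ≠ 3 := by
  by_cases hfull : IsFull G T
  · exact hT.imp fun a ha => ⟨ha, fun h => (h hfull).elim⟩
  · obtain ⟨a, ha, hdeg⟩ : ∃ a ∈ T, G.degree a ≠ 3 := by simpa [IsFull] using hfull
    exact ⟨a, ha, fun _ => hdeg⟩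

/-- A component of the link graph has at most two vertices of degree at most one, so it meets at
most two of the pairs left after removing the apexes; Hall's theorem then selects the roots. -/
theorem TriangleCover.nonempty_rootedTriangleCover {V : Type*} [Fintype V] {G : SimpleGraph V}
    [DecidableRel G.Adj] {ι : Type*} (C : TriangleCover G ι) (hsub : Subcubic G) :
    Nonempty (RootedTriangleCover G ι) := by
  classical
  have tri_nonempty : ∀ i, (C.tri i).Nonempty := fun i =>
    Finset.card_pos.1 ((C.isNClique i).card_eq ▸ three_pos)
  choose apex apex_mem degree_apex_ne using fun i =>
    exists_mem_degree_ne_three_of_not_isFull (G := G) (tri_nonempty i)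
  have card_erase : ∀ i, ((C.tri i).erase (apex i)).card = 2 := fun i => by
    rw [Finset.card_erase_of_mem (apex_mem i), (C.isNClique i).card_eq]
  have component_le : ∀ D, {v | (∃ i, v ∈ (C.tri i).erase (apex i)) ∧
      C.link.connectedComponentMk v = D}.encard ≤ 2 := by
    refine fun D => le_trans (Set.encard_le_encard fun v hv => ?_)
      (encard_covered_component_le_two hsub D)
    exact ⟨hv.1.imp fun _ => Finset.mem_of_mem_erase, hv.2⟩
  obtain ⟨root, root_mem, root_inj⟩ := exists_mem_injective_comp_of_encard_fiber_le two_pos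
    (fun i j hij => (C.disjoint hij).mono (Finset.erase_subset _ _) (Finset.erase_subset _ _))
    (fun i => (card_erase i).ge) component_le
  have root_ne_apex : ∀ i, root i ≠ apex i := fun i => (Finset.mem_erase.1 (root_mem i)).1
  choose mid root_ne_mid mid_ne_apex mem_tri_iff using fun i =>
    exists_third_of_card_eq_three (C.isNClique i).card_eq
      (Finset.mem_of_mem_erase (root_mem i)) (apex_mem i) (root_ne_apex i)
  exact ⟨{ C with
    root, mid, apex, root_ne_mid, root_ne_apex, mid_ne_apex
    mem_tri_iff := mem_tri_iff _
    degree_apex_ne := degree_apex_ne _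
    injective_component_root := root_inj }⟩

/-! ### Full triangles and the spine -/

namespace TriangleCover

variable {V : Type*} [Fintype V] {G : SimpleGraph V} [DecidableRel G.Adj] {ι : Type*}
  (C : TriangleCover G ι)

/-- The vertices on the full triangles of the cover. -/
def fullVertices : Set V := {v | ∃ i, IsFull G (C.tri i) ∧ v ∈ C.tri i}

/-- The uncovered vertices with a neighbor on a full triangle. -/
def nearFull : Set V := {v | v ∉ C.covered ∧ ∃ x ∈ C.fullVertices, G.Adj v x}

variable {C} {i : ι} {v w : V}

theorem isFull_of_mem_fullVertices (hv : v ∈ C.fullVertices) (hi : v ∈ C.tri i) :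
    IsFull G (C.tri i) := by
  obtain ⟨j, hj, hvj⟩ := hv
  exact eq_of_mem hvj hi ▸ hj

theorem mem_covered_of_mem_fullVertices (hv : v ∈ C.fullVertices) : v ∈ C.covered :=
  hv.imp fun _ h => h.2

theorem not_link_adj_of_mem_fullVertices (hsub : Subcubic G) (hsat : Saturated G 2)
    (hv : v ∈ C.fullVertices) (hw : w ∈ C.covered) : ¬ C.link.Adj v w := by
  obtain ⟨i, hi, hvi⟩ := hv
  exact fun h => notMem_covered_of_link_adj_of_isFull hsub hsat hi hvi h hw

end TriangleCover

namespace RootedTriangleCover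

open TriangleCover

variable {V : Type*} [Fintype V] {G : SimpleGraph V} [DecidableRel G.Adj] {ι : Type*}
  (R : RootedTriangleCover G ι)

/-- The apexes of the triangles that are not full. -/
def apexes : Set V := {v | ∃ i, ¬ IsFull G (R.tri i) ∧ v = R.apex i}

/-- The link graph together with the edges joining root and mid of the triangles that are not
full. It still has maximum degree two. -/
def spine : SimpleGraph V where
  Adj u v := R.link.Adj u v ∨
    ∃ i, ¬ IsFull G (R.tri i) ∧ (u = R.root i ∧ v = R.mid i ∨ u = R.mid i ∧ v = R.root i)
  symm := ⟨fun _ _ => Or.imp Adj.symm fun ⟨i, hi, h⟩ => ⟨i, hi, h.symm.imp And.symm And.symm⟩⟩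
  loopless := ⟨by
    rintro v (h | ⟨i, -, h | h⟩)
    · exact h.ne rfl
    · exact R.root_ne_mid i (h.1.symm.trans h.2)
    · exact R.root_ne_mid i (h.2.symm.trans h.1)⟩

variable {R} {i j : ι} {u v w x m : V} {J : Set V}

theorem root_mem_tri : R.root i ∈ R.tri i := R.mem_tri_iff.2 (Or.inl rfl)

theorem mid_mem_tri : R.mid i ∈ R.tri i := R.mem_tri_iff.2 (Or.inr (Or.inl rfl))

theorem apex_mem_tri : R.apex i ∈ R.tri i := R.mem_tri_iff.2 (Or.inr (Or.inr rfl))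

theorem eq_of_reachable_root (h : R.link.Reachable (R.root i) (R.root j)) : i = j :=
  R.injective_component_root (ConnectedComponent.sound h)

theorem eq_root_or_mid_of_notMem_apexes (hv : v ∈ R.tri i) (hi : ¬ IsFull G (R.tri i))
    (hva : v ∉ R.apexes) : v = R.root i ∨ v = R.mid i := by
  rcases R.mem_tri_iff.1 hv with h | h | h
  · exact Or.inl h
  · exact Or.inr h
  · exact (hva ⟨i, hi, h⟩).elim

theorem spine_adj_of_mem_tri (hi : ¬ IsFull G (R.tri i)) (hu : u ∈ R.tri i) (hv : v ∈ R.tri i)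
    (huv : u ≠ v) (hua : u ∉ R.apexes) (hva : v ∉ R.apexes) : R.spine.Adj u v := by
  rcases eq_root_or_mid_of_notMem_apexes hu hi hua with rfl | rfl <;>
    rcases eq_root_or_mid_of_notMem_apexes hv hi hva with rfl | rfl
  · exact (huv rfl).elim
  · exact Or.inr ⟨i, hi, Or.inl ⟨rfl, rfl⟩⟩
  · exact Or.inr ⟨i, hi, Or.inr ⟨rfl, rfl⟩⟩
  · exact (huv rfl).elim

theorem spine_adj_of_adj (huv : G.Adj u v) (hu : u ∉ R.fullVertices) (hua : u ∉ R.apexes)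
    (hva : v ∉ R.apexes) : R.spine.Adj u v := by
  rcases R.link_adj_or_mem_tri huv with h | ⟨i, hui, hvi⟩
  · exact Or.inl h
  · exact spine_adj_of_mem_tri (fun hi => hu ⟨i, hi, hui⟩) hui hvi huv.ne hua hva

theorem adj_of_spine_adj (h : R.spine.Adj u v) : G.Adj u v := by
  rcases h with h | ⟨i, -, ⟨rfl, rfl⟩ | ⟨rfl, rfl⟩⟩
  · exact h.1
  · exact (R.isNClique i).isClique root_mem_tri mid_mem_tri (R.root_ne_mid i)
  · exact (R.isNClique i).isClique mid_mem_tri root_mem_tri (R.root_ne_mid i).symm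

section Subcubic

variable (hsub : Subcubic G)
include hsub

theorem encard_spine_neighborSet_le_two (v : V) : (R.spine.neighborSet v).encard ≤ 2 := by
  let partners : Set V := {w | ∃ i, ¬ IsFull G (R.tri i) ∧
    (v = R.root i ∧ w = R.mid i ∨ v = R.mid i ∧ w = R.root i)}
  have spine_eq : R.spine.neighborSet v = R.link.neighborSet v ∪ partners := rfl
  have mem_tri : ∀ {w i}, v = R.root i ∧ w = R.mid i ∨ v = R.mid i ∧ w = R.root i →
      v ∈ R.tri i ∧ w ∈ R.tri i := by
    rintro w i (⟨rfl, rfl⟩ | ⟨rfl, rfl⟩)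
    exacts [⟨root_mem_tri, mid_mem_tri⟩, ⟨mid_mem_tri, root_mem_tri⟩]
  rw [spine_eq]
  by_cases hv : v ∈ R.covered
  · have partners_subsingleton : partners.Subsingleton := by
      rintro w ⟨i, -, hi⟩ y ⟨j, -, hj⟩
      obtain rfl := R.eq_of_mem (mem_tri hi).1 (mem_tri hj).1
      grind [R.root_ne_mid i]
    calc _ ≤ _ := Set.encard_union_le _ _
      _ ≤ 1 + 1 := add_le_add
        (Set.encard_le_one_iff_subsingleton.2 (subsingleton_link_neighborSet hsub hv))
        (Set.encard_le_one_iff_subsingleton.2 partners_subsingleton)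
      _ = 2 := one_add_one_eq_two
  · have partners_eq : partners = ∅ := Set.eq_empty_of_forall_notMem fun w ⟨i, _, hi⟩ =>
      hv ⟨i, (mem_tri hi).1⟩
    rw [partners_eq, Set.union_empty]
    exact encard_link_neighborSet_le_two hsub v

theorem notMem_apexes_of_link_adj (huv : R.link.Adj u v) : u ∉ R.apexes := by
  rintro ⟨i, hi, rfl⟩
  exact R.degree_apex_ne hi (degree_eq_three_of_link_adj hsub apex_mem_tri huv)

theorem mem_tri_of_adj_apex (hi : ¬ IsFull G (R.tri i)) (huv : G.Adj (R.apex i) v) :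
    v ∈ R.tri i := by
  rcases R.link_adj_or_mem_tri huv with h | ⟨j, hj, hvj⟩
  · exact (notMem_apexes_of_link_adj hsub h ⟨i, hi, rfl⟩).elim
  · exact R.eq_of_mem hj apex_mem_tri ▸ hvj

theorem notMem_apexes_of_spine_adj (huv : R.spine.Adj u v) : u ∉ R.apexes := by
  rcases huv with h | ⟨i, -, ⟨rfl, -⟩ | ⟨rfl, -⟩⟩
  · exact notMem_apexes_of_link_adj hsub h
  · rintro ⟨j, -, h⟩
    obtain rfl := R.eq_of_mem root_mem_tri (h ▸ apex_mem_tri)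
    exact R.root_ne_apex i h
  · rintro ⟨j, -, h⟩
    obtain rfl := R.eq_of_mem mid_mem_tri (h ▸ apex_mem_tri)
    exact R.mid_ne_apex i h

end Subcubic

/-! ### Selections -/

variable (R)

open Classical in
/-- The only vertex of the `i`-th triangle that may be selected. -/
noncomputable def rep (i : ι) : V := if IsFull G (R.tri i) then R.root i else R.mid i

/-- The uncovered vertices together with the representative of each triangle. -/
def transversal : Set V := {v | ∀ i, v ∈ R.tri i → v = R.rep i}

/-- The vertices that every selection has to contain: the roots of the full triangles and the link
neighbors of the roots of all other triangles. -/
def forced : Set V :=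
  {v | ∃ i, (IsFull G (R.tri i) ∧ v = R.root i) ∨
    (¬ IsFull G (R.tri i) ∧ R.link.Adj (R.root i) v)}

/-- `J` is a dominating independent subset of the transversal that contains the forced vertices.
The field `near_covered` is used to show that the vertices of `R.nearFull` outside `J` are far
apart. -/
structure IsSelection (J : Set V) : Prop where
  subset_transversal : J ⊆ R.transversal
  isIndepSet : G.IsIndepSet J
  forced_subset : R.forced ⊆ J
  dominating : ∀ w ∈ R.transversal, w ∉ J → ∃ a ∈ J, G.Adj w a
  near_covered : ∀ v ∈ R.nearFull, v ∉ J → ∃ a ∈ J, G.Adj v a ∧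
    (a ∈ R.covered ∨ ∃ b ∈ R.covered, G.Adj a b)

variable {R}

theorem rep_of_isFull (hi : IsFull G (R.tri i)) : R.rep i = R.root i := if_pos hi

theorem rep_of_not_isFull (hi : ¬ IsFull G (R.tri i)) : R.rep i = R.mid i := if_neg hi

theorem mem_transversal_of_notMem_covered (hv : v ∉ R.covered) : v ∈ R.transversal :=
  fun i hvi => (hv ⟨i, hvi⟩).elim

theorem mem_transversal_of_eq_rep (hv : v ∈ R.tri i) (h : v = R.rep i) : v ∈ R.transversal :=
  fun _ hj => R.eq_of_mem hv hj ▸ h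

theorem link_adj_of_mem_transversal (hu : u ∈ R.transversal) (hv : v ∈ R.transversal)
    (huv : G.Adj u v) : R.link.Adj u v :=
  ⟨huv, fun i hui hvi => huv.ne ((hu i hui).trans (hv i hvi).symm)⟩

theorem forced_subset_transversal (hsub : Subcubic G) (hsat : Saturated G 2) :
    R.forced ⊆ R.transversal := by
  rintro v ⟨i, ⟨hi, rfl⟩ | ⟨-, hv⟩⟩
  · exact mem_transversal_of_eq_rep root_mem_tri (rep_of_isFull hi).symm
  by_cases hcov : v ∈ R.covered
  · obtain ⟨j, hj⟩ := hcov
    have not_full : ¬ IsFull G (R.tri j) := fun hfull =>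
      not_link_adj_of_mem_fullVertices hsub hsat ⟨j, hfull, hj⟩ ⟨i, root_mem_tri⟩ hv.symm
    refine mem_transversal_of_eq_rep hj ?_
    rw [rep_of_not_isFull not_full]
    refine (eq_root_or_mid_of_notMem_apexes hj not_full
      (notMem_apexes_of_link_adj hsub hv.symm)).resolve_left ?_
    rintro rfl
    obtain rfl := eq_of_reachable_root hv.reachable
    exact hv.ne rfl
  · exact mem_transversal_of_notMem_covered hcov

theorem isIndepSet_forced (hsub : Subcubic G) (hsat : Saturated G 2) :
    G.IsIndepSet R.forced := by
  intro u hu v hv huv hadj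
  have hlink := link_adj_of_mem_transversal (forced_subset_transversal hsub hsat hu)
    (forced_subset_transversal hsub hsat hv) hadj
  have reachable_root {i : ι} {w : V} (hw : (IsFull G (R.tri i) ∧ w = R.root i) ∨
      (¬ IsFull G (R.tri i) ∧ R.link.Adj (R.root i) w)) : R.link.Reachable (R.root i) w := by
    rcases hw with ⟨-, rfl⟩ | ⟨-, hw⟩
    exacts [Reachable.refl _, hw.reachable]
  obtain ⟨i, hi⟩ := hu
  obtain ⟨j, hj⟩ := hv
  obtain rfl := eq_of_reachable_root
    (((reachable_root hi).trans hlink.reachable).trans (reachable_root hj).symm)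
  rcases hi with ⟨hi, rfl⟩ | ⟨hi, hu⟩ <;> rcases hj with ⟨hj, rfl⟩ | ⟨hj, hv⟩
  · exact huv rfl
  · exact hj hi
  · exact hi hj
  · exact huv (subsingleton_link_neighborSet hsub ⟨i, root_mem_tri⟩ hu hv)

variable (R) in
/-- The forced set is first enlarged within `R.nearFull`, which secures `near_covered`, and only
then within the whole transversal. -/
theorem exists_isSelection (hsub : Subcubic G) (hsat : Saturated G 2) :
    ∃ J, R.IsSelection J := by
  have nearFull_sub : R.nearFull ⊆ R.transversal := fun v hv =>
    mem_transversal_of_notMem_covered hv.1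
  obtain ⟨J₁, forced_sub, J₁_sub, J₁_indep, J₁_dom⟩ :=
    exists_isIndepSet_superset_dominating (isIndepSet_forced (R := R) hsub hsat) R.nearFull
  obtain ⟨J, J₁_sub_J, J_sub, J_indep, J_dom⟩ :=
    exists_isIndepSet_superset_dominating J₁_indep R.transversal
  refine ⟨J, ⟨J_sub.trans ?_, J_indep, forced_sub.trans J₁_sub_J, J_dom, fun v hv hvJ => ?_⟩⟩
  · exact Set.union_subset (J₁_sub.trans
      (Set.union_subset (forced_subset_transversal hsub hsat) nearFull_sub)) subset_rfl
  obtain ⟨a, ha, hva⟩ := J₁_dom v hv fun h => hvJ (J₁_sub_J h)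
  refine ⟨a, J₁_sub_J ha, hva, ?_⟩
  rcases J₁_sub ha with ⟨i, ⟨-, rfl⟩ | ⟨-, hia⟩⟩ | ⟨-, b, hb, hab⟩
  · exact Or.inl ⟨i, root_mem_tri⟩
  · exact Or.inr ⟨R.root i, ⟨i, root_mem_tri⟩, hia.1.symm⟩
  · exact Or.inr ⟨b, mem_covered_of_mem_fullVertices hb, hab⟩

/-! ### Coloring the conflict graph -/

variable (R)

/-- A selection together with the apexes of the triangles that are not full and have no selected
vertex. This is the color class of radius one. -/
def completion (J : Set V) : Set V :=
  J ∪ {v | ∃ i, ¬ IsFull G (R.tri i) ∧ R.mid i ∉ J ∧ v = R.apex i}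

/-- The vertices other than the root on the full triangles. -/
def fullPairs : Set V := {v | ∃ i, IsFull G (R.tri i) ∧ v ∈ R.tri i ∧ v ≠ R.root i}

/-- The vertices that get the three colors of radius two first. All others are then colored
greedily. -/
def core (J : Set V) : Set V := R.nearFull \ J ∪ R.fullPairs

/-- The graph joining the two vertices other than the root on each triangle. -/
def pairMatching : SimpleGraph V where
  Adj u v := u ≠ v ∧ ∃ i, (u ∈ R.tri i ∧ u ≠ R.root i) ∧ v ∈ R.tri i ∧ v ≠ R.root i
  symm := ⟨fun _ _ ⟨hne, i, hu, hv⟩ => ⟨hne.symm, i, hv, hu⟩⟩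
  loopless := ⟨fun _ h => h.1 rfl⟩

/-- The graph joining the covered vertices with a common link neighbor. -/
def linkMatching : SimpleGraph V where
  Adj u v := u ≠ v ∧ u ∈ R.covered ∧ v ∈ R.covered ∧ ∃ x, R.link.Adj u x ∧ R.link.Adj x v
  symm := ⟨fun _ _ ⟨hne, hu, hv, x, hux, hxv⟩ => ⟨hne.symm, hv, hu, x, hxv.symm, hux.symm⟩⟩
  loopless := ⟨fun _ h => h.1 rfl⟩

variable {R}

theorem core_subset_compl_apexes : R.core J ⊆ R.apexesᶜ := by
  rintro v (⟨hv, -⟩ | ⟨i, hi, hvi, -⟩) ⟨j, hj, rfl⟩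
  · exact hv.1 ⟨j, apex_mem_tri⟩
  · exact hj (R.eq_of_mem hvi apex_mem_tri ▸ hi)

theorem subsingleton_pairMatching_neighborSet (v : V) :
    (R.pairMatching.neighborSet v).Subsingleton := by
  rintro w ⟨hvw, i, hv, hw⟩ y ⟨hvy, j, hv', hy⟩
  obtain rfl := R.eq_of_mem hv.1 hv'.1
  have mid_or_apex : ∀ z, z ∈ R.tri i ∧ z ≠ R.root i → z = R.mid i ∨ z = R.apex i := fun z hz =>
    (R.mem_tri_iff.1 hz.1).resolve_left hz.2
  grind

theorem subsingleton_linkMatching_neighborSet (hsub : Subcubic G) (v : V) :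
    (R.linkMatching.neighborSet v).Subsingleton := by
  rintro w ⟨hvw, hv, -, x, hvx, hxw⟩ y ⟨hvy, -, -, z, hvz, hzy⟩
  obtain rfl := subsingleton_link_neighborSet hsub hv hvx hvz
  exact subsingleton_sdiff_singleton_of_encard_le_two (encard_link_neighborSet_le_two hsub x)
    hvx.symm ⟨hxw, hvw.symm⟩ ⟨hzy, hvy.symm⟩

theorem colorable_two_induce_fullPairs (hsub : Subcubic G) (hsat : Saturated G 2) (I : Set V) :
    ((conflictGraph G I).induce R.fullPairs).Colorable 2 := by
  refine Colorable.of_hom (G' := R.pairMatching ⊔ R.linkMatching) ⟨Subtype.val, ?_⟩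
    (colorable_two_sup_of_subsingleton_neighborSet subsingleton_pairMatching_neighborSet
      (subsingleton_linkMatching_neighborSet hsub))
  rintro ⟨u, i, hi, hui, hur⟩ ⟨v, j, hj, hvj, hvr⟩ ⟨huv, -, -, hconf⟩
  have not_link {w y : V} (hw : w ∈ R.fullVertices) (hy : y ∈ R.covered) : ¬ R.link.Adj w y :=
    not_link_adj_of_mem_fullVertices hsub hsat hw hy
  have pair_adj (hvi : v ∈ R.tri i) : R.pairMatching.Adj u v :=
    ⟨huv, i, ⟨hui, hur⟩, hvi, R.eq_of_mem hvi hvj ▸ hvr⟩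
  rcases hconf with hadj | ⟨x, hux, hvx⟩
  · rcases R.link_adj_or_mem_tri hadj with h | ⟨k, huk, hvk⟩
    · exact (not_link ⟨i, hi, hui⟩ ⟨j, hvj⟩ h).elim
    · exact Or.inl (pair_adj (R.eq_of_mem huk hui ▸ hvk))
  rcases R.link_adj_or_mem_tri hux with hux | ⟨k, huk, hxk⟩ <;>
    rcases R.link_adj_or_mem_tri hvx with hvx | ⟨l, hvl, hxl⟩
  · exact Or.inr ⟨huv, ⟨i, hui⟩, ⟨j, hvj⟩, x, hux, hvx.symm⟩
  · exact (not_link ⟨i, hi, hui⟩ ⟨l, hxl⟩ hux).elim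
  · exact (not_link ⟨j, hj, hvj⟩ ⟨k, hxk⟩ hvx).elim
  · obtain rfl := R.eq_of_mem hxk hxl
    exact Or.inl (pair_adj (R.eq_of_mem huk hui ▸ hvl))

namespace IsSelection

variable (hJ : R.IsSelection J)
include hJ

theorem root_mem (hi : IsFull G (R.tri i)) : R.root i ∈ J :=
  hJ.forced_subset ⟨i, Or.inl ⟨hi, rfl⟩⟩

theorem mem_of_link_adj_root (hi : ¬ IsFull G (R.tri i)) (hv : R.link.Adj (R.root i) v) : v ∈ J :=
  hJ.forced_subset ⟨i, Or.inr ⟨hi, hv⟩⟩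

theorem eq_root_of_mem_fullVertices (hv : v ∈ R.fullVertices) (hvJ : v ∈ J) :
    ∃ i, IsFull G (R.tri i) ∧ v = R.root i := by
  obtain ⟨i, hi, hvi⟩ := hv
  exact ⟨i, hi, (hJ.subset_transversal hvJ i hvi).trans (rep_of_isFull hi)⟩

theorem notMem_fullVertices_of_notMem_core (hu : u ∉ R.core J) (huJ : u ∉ J) :
    u ∉ R.fullVertices := by
  rintro ⟨i, hi, hui⟩
  exact hu (Or.inr ⟨i, hi, hui, fun h => huJ (h ▸ hJ.root_mem hi)⟩)

theorem isIndepSet_completion (hsub : Subcubic G) : G.IsIndepSet (R.completion J) := by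
  have apex_not_adj {i : ι} (hi : ¬ IsFull G (R.tri i)) (hmid : R.mid i ∉ J) {v : V}
      (hv : v ∈ R.completion J) : ¬ G.Adj (R.apex i) v := by
    intro hadj
    have hvi := mem_tri_of_adj_apex hsub hi hadj
    rcases hv with hvJ | ⟨j, -, -, rfl⟩
    · have v_eq := (hJ.subset_transversal hvJ i hvi).trans (rep_of_not_isFull hi)
      exact hmid (v_eq ▸ hvJ)
    · obtain rfl := R.eq_of_mem apex_mem_tri hvi
      exact hadj.ne rfl
  intro u hu v hv huv hadj
  rcases hu with huJ | ⟨i, hi, hmid, rfl⟩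
  · rcases hv with hvJ | ⟨i, hi, hmid, rfl⟩
    · exact hJ.isIndepSet huJ hvJ huv hadj
    · exact apex_not_adj hi hmid (Or.inl huJ) hadj.symm
  · exact apex_not_adj hi hmid hv hadj

variable (hsub : Subcubic G)
include hsub

theorem exists_adj_root (hv : v ∈ R.nearFull) (hvJ : v ∉ J) (hm : m ∉ R.covered)
    (hvm : G.Adj v m) (hmJ : m ∈ J → ∀ b ∈ R.covered, ¬ G.Adj m b) :
    ∃ i, R.link.Adj v (R.root i) := by
  obtain ⟨hvc, x, hx, hvx⟩ := hv
  obtain ⟨a, haJ, hva, ha⟩ := hJ.near_covered v ⟨hvc, x, hx, hvx⟩ hvJ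
  have ham : a ≠ m := by
    rintro rfl
    obtain ⟨b, hb, hab⟩ := ha.resolve_left hm
    exact hmJ haJ b hb hab
  have hmx : m ≠ x := (ne_of_mem_of_not_mem (mem_covered_of_mem_fullVertices hx) hm).symm
  have hax : a = x := subsingleton_sdiff_singleton_of_encard_le_two
    (encard_link_neighborSet_le_two hsub v) (link_adj_of_notMem_covered hvc hvm)
    ⟨link_adj_of_notMem_covered hvc hva, ham⟩ ⟨link_adj_of_notMem_covered hvc hvx, hmx.symm⟩
  obtain ⟨i, -, rfl⟩ := hJ.eq_root_of_mem_fullVertices (hax ▸ hx) haJ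
  exact ⟨i, link_adj_of_notMem_covered hvc hva⟩

/-- Both vertices would be adjacent to the root of one link component. -/
theorem isIndepSet_conflictGraph_nearFull (I : Set V) :
    (conflictGraph G I).IsIndepSet (R.nearFull \ J) := by
  rintro u ⟨hu, huJ⟩ v ⟨hv, hvJ⟩ huv ⟨-, -, -, hconf⟩
  have not_common_root (huv' : R.link.Reachable u v) (hu' : ∃ i, R.link.Adj u (R.root i))
      (hv' : ∃ j, R.link.Adj v (R.root j)) : False := by
    obtain ⟨i, hi⟩ := hu'
    obtain ⟨j, hj⟩ := hv'
    obtain rfl := eq_of_reachable_root ((hi.symm.reachable.trans huv').trans hj.reachable)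
    exact huv (subsingleton_link_neighborSet hsub ⟨i, root_mem_tri⟩ hi.symm hj.symm)
  rcases hconf with hadj | ⟨m, hum, hvm⟩
  · exact not_common_root (link_adj_of_notMem_covered hu.1 hadj).reachable
      (hJ.exists_adj_root hsub hu huJ hv.1 hadj fun h => (hvJ h).elim)
      (hJ.exists_adj_root hsub hv hvJ hu.1 hadj.symm fun h => (huJ h).elim)
  have um := link_adj_of_notMem_covered hu.1 hum
  have vm := link_adj_of_notMem_covered hv.1 hvm
  by_cases hm : m ∈ R.covered
  · exact huv (subsingleton_link_neighborSet hsub hm um.symm vm.symm)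
  have nbrs_uncovered : ∀ b ∈ R.covered, ¬ G.Adj m b := by
    intro b hb hmb
    refine huv.symm (subsingleton_sdiff_singleton_of_encard_le_two
      (encard_link_neighborSet_le_two hsub m) (link_adj_of_notMem_covered hm hmb)
      ⟨vm.symm, ?_⟩ ⟨um.symm, ?_⟩)
    exacts [(ne_of_mem_of_not_mem hb hv.1).symm, (ne_of_mem_of_not_mem hb hu.1).symm]
  exact not_common_root (um.reachable.trans vm.symm.reachable)
    (hJ.exists_adj_root hsub hu huJ hm hum fun _ => nbrs_uncovered)
    (hJ.exists_adj_root hsub hv hvJ hm hvm fun _ => nbrs_uncovered)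

theorem colorable_three_induce_core (hsat : Saturated G 2) (I : Set V) :
    ((conflictGraph G I).induce (R.core J)).Colorable 3 :=
  colorable_induce_union_of_isIndepSet (colorable_two_induce_fullPairs hsub hsat I)
    (hJ.isIndepSet_conflictGraph_nearFull hsub I)

/-- A vertex of the transversal has a selected neighbor, and the root of a triangle that is not
full has only selected link neighbors. -/
theorem subsingleton_spine_neighborSet_sdiff (hmJ : m ∉ J) (hm : m ∉ R.fullVertices)
    (hma : m ∉ R.apexes) : (R.spine.neighborSet m \ J).Subsingleton := by
  by_cases hmT : m ∈ R.transversal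
  · obtain ⟨a, haJ, hma'⟩ := hJ.dominating m hmT hmJ
    have spine_adj : R.spine.Adj m a :=
      Or.inl (link_adj_of_mem_transversal hmT (hJ.subset_transversal haJ) hma')
    exact (subsingleton_sdiff_singleton_of_encard_le_two (encard_spine_neighborSet_le_two hsub m)
      spine_adj).anti fun w hw => ⟨hw.1, (ne_of_mem_of_not_mem haJ hw.2).symm⟩
  obtain ⟨i, hmi⟩ : m ∈ R.covered := by
    by_contra hmc
    exact hmT (mem_transversal_of_notMem_covered hmc)
  have hi : ¬ IsFull G (R.tri i) := fun hi => hm ⟨i, hi, hmi⟩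
  rcases eq_root_or_mid_of_notMem_apexes hmi hi hma with rfl | rfl
  · have eq_mid : ∀ w ∈ R.spine.neighborSet (R.root i) \ J, w = R.mid i := by
      rintro w ⟨hw | ⟨j, -, ⟨h, rfl⟩ | ⟨h, -⟩⟩, hwJ⟩
      · exact (hwJ (hJ.mem_of_link_adj_root hi hw)).elim
      · rw [R.eq_of_mem hmi (j := j) (h.symm ▸ root_mem_tri)]
      · obtain rfl := R.eq_of_mem hmi (h ▸ mid_mem_tri)
        exact (R.root_ne_mid i h).elim
    exact fun w hw y hy => (eq_mid w hw).trans (eq_mid y hy).symm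
  · exact (hmT (mem_transversal_of_eq_rep hmi (rep_of_not_isFull hi).symm)).elim

theorem subsingleton_spine_reach (hu : u ∉ J) (hum : R.spine.Adj u m) (hm : m ∉ R.fullVertices) :
    {w | w ≠ u ∧ w ∉ J ∧ (w = m ∨ R.spine.Adj m w)}.Subsingleton := by
  by_cases hmJ : m ∈ J
  · refine (subsingleton_sdiff_singleton_of_encard_le_two
      (encard_spine_neighborSet_le_two hsub m) hum.symm).anti ?_
    rintro w ⟨hwu, hwJ, rfl | hmw⟩
    exacts [(hwJ hmJ).elim, ⟨hmw, hwu⟩]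
  · refine Set.subsingleton_singleton.anti (t := {m}) ?_
    rintro w ⟨hwu, hwJ, rfl | hmw⟩
    · rfl
    · exact (hwu (hJ.subsingleton_spine_neighborSet_sdiff hsub hmJ hm
        (notMem_apexes_of_spine_adj hsub hum.symm) ⟨hmw, hwJ⟩ ⟨hum.symm, hu⟩)).elim

theorem notMem_fullVertices_of_adj_of_notMem_core (hsat : Saturated G 2) (hu : u ∉ R.core J)
    (huJ : u ∉ J) (hux : G.Adj u x) : x ∉ R.fullVertices := by
  intro hx
  have hu_covered : u ∈ R.covered := by
    by_contra huc
    exact hu (Or.inl ⟨⟨huc, x, hx, hux⟩, huJ⟩)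
  rcases R.link_adj_or_mem_tri hux with h | ⟨i, hui, hxi⟩
  · exact not_link_adj_of_mem_fullVertices hsub hsat hx hu_covered h.symm
  · exact hJ.notMem_fullVertices_of_notMem_core hu huJ ⟨i, isFull_of_mem_fullVertices hx hxi, hui⟩

theorem exists_spine_adj_of_conflictGraph_adj (hsat : Saturated G 2) (hu : u ∉ R.core J)
    (hua : u ∉ R.apexes) (hwa : w ∉ R.apexes)
    (huw : (conflictGraph G (R.completion J)).Adj u w) :
    ∃ m, R.spine.Adj u m ∧ w ≠ u ∧ w ∉ J ∧ (w = m ∨ R.spine.Adj m w) := by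
  obtain ⟨hne, huI, hwI, hconf⟩ := huw
  have huJ : u ∉ J := fun h => huI (Or.inl h)
  have hwJ : w ∉ J := fun h => hwI (Or.inl h)
  have huf := hJ.notMem_fullVertices_of_notMem_core hu huJ
  rcases hconf with hadj | ⟨x, hux, hwx⟩
  · exact ⟨w, spine_adj_of_adj hadj huf hua hwa, hne.symm, hwJ, Or.inl rfl⟩
  by_cases hxa : x ∈ R.apexes
  · obtain ⟨j, hj, rfl⟩ := hxa
    exact ⟨w, spine_adj_of_mem_tri hj (mem_tri_of_adj_apex hsub hj hux.symm)
      (mem_tri_of_adj_apex hsub hj hwx.symm) hne hua hwa, hne.symm, hwJ, Or.inl rfl⟩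
  · have hxf := hJ.notMem_fullVertices_of_adj_of_notMem_core hsub hsat hu huJ hux
    exact ⟨x, spine_adj_of_adj hux huf hua hxa, hne.symm, hwJ,
      Or.inr (spine_adj_of_adj hwx.symm hxf hxa hwa)⟩

theorem encard_neighborSet_inter_compl_apexes_lt (hsat : Saturated G 2)
    (hu : u ∈ R.apexesᶜ \ R.core J) :
    ((conflictGraph G (R.completion J)).neighborSet u ∩ R.apexesᶜ).encard < 3 := by
  by_cases huJ : u ∈ J
  · rw [Set.eq_empty_of_forall_notMem (s := _ ∩ _) fun w hw => hw.1.2.1 (Or.inl huJ),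
      Set.encard_empty]
    exact zero_lt_three
  have nbrs_subset : (conflictGraph G (R.completion J)).neighborSet u ∩ R.apexesᶜ ⊆
      ⋃ m ∈ R.spine.neighborSet u, {w | w ≠ u ∧ w ∉ J ∧ (w = m ∨ R.spine.Adj m w)} := by
    intro w hw
    obtain ⟨m, hum, hwm⟩ :=
      hJ.exists_spine_adj_of_conflictGraph_adj hsub hsat hu.2 hu.1 hw.2 hw.1
    exact Set.mem_biUnion hum hwm
  calc _ ≤ (R.spine.neighborSet u).encard :=
        encard_le_encard_of_subset_biUnion_subsingleton nbrs_subset fun m hum =>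
          hJ.subsingleton_spine_reach hsub huJ hum
            (hJ.notMem_fullVertices_of_adj_of_notMem_core hsub hsat hu.2 huJ (adj_of_spine_adj hum))
    _ ≤ 2 := encard_spine_neighborSet_le_two hsub u
    _ < 3 := by norm_num

theorem encard_neighborSet_apex_lt (hu : u ∈ R.apexes) :
    ((conflictGraph G (R.completion J)).neighborSet u).encard < 3 := by
  obtain ⟨i, hi, rfl⟩ := hu
  have nbrs_subset : (conflictGraph G (R.completion J)).neighborSet (R.apex i) ⊆
      insert (R.root i) (R.link.neighborSet (R.mid i)) := by
    rintro w ⟨hne, huI, hwI, hconf⟩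
    have hmid : R.mid i ∈ J := by
      by_contra hmid
      exact huI (Or.inr ⟨i, hi, hmid, rfl⟩)
    have eq_root_of_mem_tri (hw : w ∈ R.tri i) : w = R.root i := by
      rcases R.mem_tri_iff.1 hw with h | rfl | rfl
      exacts [h, (hwI (Or.inl hmid)).elim, (hne rfl).elim]
    rcases hconf with hadj | ⟨x, hux, hwx⟩
    · exact Or.inl (eq_root_of_mem_tri (mem_tri_of_adj_apex hsub hi hadj))
    have hxi := mem_tri_of_adj_apex hsub hi hux
    rcases R.link_adj_or_mem_tri hwx.symm with hlink | ⟨j, hxj, hwj⟩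
    · rcases R.mem_tri_iff.1 hxi with rfl | rfl | rfl
      · exact (hwI (Or.inl (hJ.mem_of_link_adj_root hi hlink))).elim
      · exact Or.inr hlink
      · exact (hux.ne rfl).elim
    · exact Or.inl (eq_root_of_mem_tri (R.eq_of_mem hxj hxi ▸ hwj))
  calc _ ≤ _ := Set.encard_le_encard nbrs_subset
    _ ≤ _ := Set.encard_insert_le _ _
    _ ≤ 1 + 1 := add_le_add_left (Set.encard_le_one_iff_subsingleton.2
      (subsingleton_link_neighborSet hsub ⟨i, mid_mem_tri⟩)) 1
    _ < 3 := by norm_num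

theorem colorable_three_conflictGraph (hsat : Saturated G 2) :
    (conflictGraph G (R.completion J)).Colorable 3 := by
  have core_colorable := hJ.colorable_three_induce_core hsub hsat (R.completion J)
  have compl_apexes_colorable := colorable_induce_of_encard_neighborSet_lt core_colorable
    core_subset_compl_apexes (Set.toFinite _)
    fun _ hu => hJ.encard_neighborSet_inter_compl_apexes_lt hsub hsat hu
  have univ_colorable := colorable_induce_of_encard_neighborSet_lt compl_apexes_colorable
    (Set.subset_univ _) (Set.toFinite _) fun u hu => by
      rw [Set.inter_univ]
      exact hJ.encard_neighborSet_apex_lt hsub (Set.notMem_compl_iff.1 hu.2)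
  exact univ_colorable.of_hom (induceUnivIso _).symm.toHom

end IsSelection

end RootedTriangleCover

/-- Every 2-saturated subcubic graph in which every 3-vertex lies on a triangle
admits a (1,2,2,2)-packing coloring. -/
theorem stmt_11 {V : Type*} [Fintype V] (G : SimpleGraph V) [DecidableRel G.Adj]
    (hsub : Subcubic G) (hsat : Saturated G 2)
    (hgirth : ∀ v : V, G.degree v = 3 → ∃ a b : V, G.Adj v a ∧ G.Adj v b ∧ G.Adj a b) :
    ∃ c : V → Fin 4, IsPackingColoring G ![1, 2, 2, 2] c := by
  classical
  have htri : ∀ v, G.degree v = 3 → ∃ T, G.IsNClique 3 T ∧ v ∈ T := fun v hv => by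
    obtain ⟨a, b, hva, hvb, hab⟩ := hgirth v hv
    exact ⟨{v, a, b}, is3Clique_triple_iff.2 ⟨hva, hvb, hab⟩, Finset.mem_insert_self _ _⟩
  obtain ⟨𝒯, clique, disj, covers⟩ := exists_disjoint_triangles hsub hsat htri
  let C : TriangleCover G 𝒯 :=
    { tri := (↑)
      isNClique := fun T => clique T T.2
      disjoint := fun S T hST => disj S.2 T.2 (Subtype.coe_ne_coe.2 hST)
      covers := fun v hv => let ⟨T, hT, hvT⟩ := covers v hv; ⟨⟨T, hT⟩, hvT⟩ }
  obtain ⟨R⟩ := C.nonempty_rootedTriangleCover hsub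
  obtain ⟨J, hJ⟩ := R.exists_isSelection hsub hsat
  have radii : (![1, 2, 2, 2] : Fin 4 → ℕ) = Fin.cons 1 fun _ => 2 := by
    ext i; fin_cases i <;> rfl
  rw [radii]
  exact exists_isPackingColoring_of_colorable_conflictGraph (hJ.isIndepSet_completion hsub)
    (hJ.colorable_three_conflictGraph hsub hsat)
end
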